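/- arXiv:1308.5612 — 3 statements merged into one kernel-verified Lean document; each statement's English description precedes it below -/
import Mathlib

section
/- (Fractional Gagliardo–Nirenberg inequality.) Let d ≥ 1, s > 0, 0 < λ < d, p ∈ (1, ∞), and set θ = (2d−2pd+pλ)/(d−2ps−pd+pλ). If (d−λ)/(d+2s−λ) ≤ θ < 1, then there is a constant C such that for every Schwartz function ψ on ℝ^d: ‖D^{(d−λ)/2} ψ‖_{L^p} ≤ C · ‖ψ‖_{L^2}^{1−θ} · ‖D^{s+(d−λ)/2} ψ‖_{L^{2p/(p+1)}}^{θ}. -/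
open MeasureTheory SchwartzMap FourierTransform ENNReal

noncomputable section

/-- The Fourier multiplier `D^α = (√-Δ)^α` with symbol `|ξ|^α`, realized for nice functions
via the (Plancherel-normalized) Fourier integral and its inverse:
`D^α ψ = 𝓕⁻ ( |ξ|^α 𝓕ψ )`. -/
def Dop (d : ℕ) (α : ℝ) (ψ : EuclideanSpace ℝ (Fin d) → ℂ) :
    EuclideanSpace ℝ (Fin d) → ℂ :=
  𝓕⁻ (fun ξ => (‖ξ‖ ^ α : ℝ) • 𝓕 ψ ξ)

/-- Uncentered Hardy-Littlewood maximal function. -/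
def MF {d : ℕ} (f : EuclideanSpace ℝ (Fin d) → ℝ≥0∞) (x : EuclideanSpace ℝ (Fin d)) : ℝ≥0∞ :=
  ⨆ (c : EuclideanSpace ℝ (Fin d)) (r : ℝ) (_ : x ∈ Metric.ball c r),
    (volume (Metric.ball c r))⁻¹ * ∫⁻ y in Metric.ball c r, f y

theorem lt_MF_iff {d : ℕ} (f : EuclideanSpace ℝ (Fin d) → ℝ≥0∞) (x) (l : ℝ≥0∞) :
    l < MF f x ↔ ∃ (c : EuclideanSpace ℝ (Fin d)) (r : ℝ), x ∈ Metric.ball c r ∧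
      l < (volume (Metric.ball c r))⁻¹ * ∫⁻ y in Metric.ball c r, f y := by
  simp only [MF, lt_iSup_iff, exists_prop]

theorem ball_le_MF {d : ℕ} (f : EuclideanSpace ℝ (Fin d) → ℝ≥0∞) (x) (r : ℝ) (hr : 0 < r) :
    ∫⁻ y in Metric.ball x r, f y ≤ volume (Metric.ball x r) * MF f x := by
  have h : (volume (Metric.ball x r))⁻¹ * ∫⁻ y in Metric.ball x r, f y ≤ MF f x := by
    unfold MF
    refine le_iSup_of_le x (le_iSup_of_le r (le_iSup_of_le (Metric.mem_ball_self hr) le_rfl))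
  have h0 : volume (Metric.ball x r) ≠ 0 := (Metric.measure_ball_pos _ _ hr).ne'
  have h1 : volume (Metric.ball x r) ≠ ∞ := measure_ball_lt_top.ne
  calc _ = volume (Metric.ball x r) * ((volume (Metric.ball x r))⁻¹ *
        ∫⁻ y in Metric.ball x r, f y) := by
        rw [← mul_assoc, ENNReal.mul_inv_cancel h0 h1, one_mul]
    _ ≤ _ := by gcongr

theorem measurable_MF {d : ℕ} (f : EuclideanSpace ℝ (Fin d) → ℝ≥0∞) : Measurable (MF f) := by
  apply measurable_of_Ioi
  intro l
  apply IsOpen.measurableSet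
  rw [isOpen_iff_mem_nhds]
  intro x hx
  obtain ⟨c, r, hxc, h⟩ := (lt_MF_iff f x l).1 hx
  filter_upwards [Metric.isOpen_ball.mem_nhds hxc] with y hy
  exact (lt_MF_iff f y l).2 ⟨c, r, hy, h⟩

theorem MF_weak {d : ℕ} (hd : 1 ≤ d) (f : EuclideanSpace ℝ (Fin d) → ℝ≥0∞) (l : ℝ≥0∞)
    (hl : l ≠ 0) (hl' : l ≠ ∞) :
    l * volume {x | l < MF f x} ≤ 5 ^ d * ∫⁻ x, f x := by
  by_cases hf : ∫⁻ x, f x = ∞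
  · rw [hf, ENNReal.mul_top (by positivity)]; exact le_top
  have : Nonempty (Fin d) := ⟨⟨0, hd⟩⟩
  let t : Set (EuclideanSpace ℝ (Fin d) × ℝ) :=
    {a | 0 < a.2 ∧ l * volume (Metric.ball a.1 a.2) < ∫⁻ y in Metric.ball a.1 a.2, f y}
  have hvol : ∀ (c : EuclideanSpace ℝ (Fin d)) (r : ℝ), 0 ≤ r → volume (Metric.ball c r) =
      ENNReal.ofReal (r ^ d) * volume (Metric.ball (0 : EuclideanSpace ℝ (Fin d)) 1) := by
    intro c r hr
    have := Measure.addHaar_ball (volume : Measure (EuclideanSpace ℝ (Fin d))) c hr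
    simpa using this
  have hv0 : volume (Metric.ball (0 : EuclideanSpace ℝ (Fin d)) 1) ≠ 0 :=
    (Metric.measure_ball_pos _ _ one_pos).ne'
  have hv1 : volume (Metric.ball (0 : EuclideanSpace ℝ (Fin d)) 1) ≠ ∞ := measure_ball_lt_top.ne
  set v := volume (Metric.ball (0 : EuclideanSpace ℝ (Fin d)) 1) with hv
  obtain ⟨R, hR⟩ : ∃ R : ℝ, ∀ a ∈ t, a.2 ≤ R := by
    refine ⟨max 1 ((∫⁻ x, f x) / (l * v)).toReal, ?_⟩
    rintro ⟨c, r⟩ ⟨hr, h⟩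
    simp only at hr h ⊢
    by_cases hr1 : r ≤ 1
    · exact le_max_of_le_left hr1
    apply le_max_of_le_right
    push Not at hr1
    rw [hvol c r hr.le] at h
    have h2 := h.le.trans (setLIntegral_le_lintegral _ _)
    have h3 : ENNReal.ofReal (r ^ d) ≤ (∫⁻ x, f x) / (l * v) := by
      rw [ENNReal.le_div_iff_mul_le (Or.inl (mul_ne_zero hl hv0))
        (Or.inl (ENNReal.mul_ne_top hl' hv1))]
      calc _ = l * (ENNReal.ofReal (r ^ d) * v) := by ring
        _ ≤ _ := h2
    have h4 : r ^ d ≤ ((∫⁻ x, f x) / (l * v)).toReal := by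
      rw [← ENNReal.ofReal_le_iff_le_toReal]
      · exact h3
      · exact ENNReal.div_ne_top hf (mul_ne_zero hl hv0)
    refine le_trans ?_ h4
    exact le_self_pow₀ hr1.le (by omega)
  obtain ⟨u, hut, hdisj, hcov⟩ := Vitali.exists_disjoint_subfamily_covering_enlargement_closedBall
    t (fun a => a.1) (fun a => a.2) R hR 5 (by norm_num)
  have hdisj' : u.PairwiseDisjoint fun a => Metric.ball a.1 a.2 :=
    hdisj.mono (fun a => Metric.ball_subset_closedBall)
  have hcount : u.Countable := hdisj'.countable_of_isOpen (fun a _ => Metric.isOpen_ball)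
    (fun a ha => ⟨a.1, Metric.mem_ball_self (hut ha).1⟩)
  have hsub : {x | l < MF f x} ⊆ ⋃ a ∈ u, Metric.closedBall a.1 (5 * a.2) := by
    intro x hx
    obtain ⟨c, r, hxc, h⟩ := (lt_MF_iff f x l).1 hx
    have hr : 0 < r := Metric.pos_of_mem_ball hxc
    have hat : (c, r) ∈ t := by
      refine ⟨hr, ?_⟩
      simp only
      rw [mul_comm, ← div_eq_mul_inv] at h
      rw [ENNReal.lt_div_iff_mul_lt (Or.inl (Metric.measure_ball_pos _ _ hr).ne')
        (Or.inl measure_ball_lt_top.ne)] at h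
      exact h
    obtain ⟨b, hb, hbc⟩ := hcov _ hat
    exact Set.mem_biUnion hb (hbc (Metric.ball_subset_closedBall hxc))
  calc l * volume {x | l < MF f x} ≤ l * ∑' a : u, volume (Metric.closedBall a.1.1 (5 * a.1.2)) := by
        gcongr
        exact (measure_mono hsub).trans (measure_biUnion_le _ hcount _)
    _ = ∑' a : u, 5 ^ d * (l * volume (Metric.ball a.1.1 a.1.2)) := by
        rw [← ENNReal.tsum_mul_left]
        congr 1; ext a
        have ha : 0 < a.1.2 := (hut a.2).1
        rw [Measure.addHaar_closedBall_eq_addHaar_ball, hvol _ _ (by positivity), hvol _ _ ha.le,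
          mul_pow, ENNReal.ofReal_mul (by positivity), ENNReal.ofReal_pow (by norm_num)]
        simp only [ENNReal.ofReal_ofNat]
        ring
    _ ≤ ∑' a : u, 5 ^ d * ∫⁻ y in Metric.ball a.1.1 a.1.2, f y := by
        gcongr with a
        exact (hut a.2).2.le
    _ = 5 ^ d * ∑' a : u, ∫⁻ y in Metric.ball a.1.1 a.1.2, f y := ENNReal.tsum_mul_left
    _ = 5 ^ d * ∫⁻ y in ⋃ a ∈ u, Metric.ball a.1 a.2, f y := by
        rw [lintegral_biUnion hcount (fun a _ => Metric.isOpen_ball.measurableSet) hdisj']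
    _ ≤ _ := by
        gcongr
        exact Measure.restrict_le_self

theorem MF_trunc {d : ℕ} (f : EuclideanSpace ℝ (Fin d) → ℝ≥0∞) (l : ℝ≥0∞)
    (x : EuclideanSpace ℝ (Fin d)) :
    MF f x ≤ MF ({y | l < f y}.indicator f) x + l := by
  unfold MF
  refine iSup_le fun c => iSup_le fun r => iSup_le fun hx => ?_
  have hr : 0 < r := Metric.pos_of_mem_ball hx
  have h0 : volume (Metric.ball c r) ≠ 0 := (Metric.measure_ball_pos _ _ hr).ne'
  have h1 : volume (Metric.ball c r) ≠ ∞ := measure_ball_lt_top.ne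
  calc _ ≤ (volume (Metric.ball c r))⁻¹ *
        ∫⁻ y in Metric.ball c r, ({y | l < f y}.indicator f y + l) := by
        gcongr with y
        by_cases h : l < f y
        · rw [Set.indicator_of_mem (by exact h)]; exact le_self_add
        · exact (not_lt.1 h).trans le_add_self
    _ = (volume (Metric.ball c r))⁻¹ * (∫⁻ y in Metric.ball c r, {y | l < f y}.indicator f y) + l := by
        rw [lintegral_add_right _ measurable_const, setLIntegral_const, mul_add]
        congr 1
        rw [mul_comm l, ← mul_assoc, ENNReal.inv_mul_cancel h0 h1, one_mul]
    _ ≤ _ := by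
        gcongr
        exact le_iSup_of_le c (le_iSup_of_le r (le_iSup_of_le hx le_rfl))

theorem lc_real (v : ℝ) (hv : 0 ≤ v) (r : ℝ) (hr : 0 < r) :
    ∫⁻ t in Set.Ioc 0 v, ENNReal.ofReal (t ^ (r - 1)) = ENNReal.ofReal (v ^ r / r) := by
  rw [← ofReal_integral_eq_lintegral_ofReal]
  · rw [← intervalIntegral.integral_of_le hv, integral_rpow (Or.inl (by linarith))]
    simp [Real.zero_rpow hr.ne']
  · have := intervalIntegral.intervalIntegrable_rpow' (a := 0) (b := v) (r := r - 1) (by linarith)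
    rwa [intervalIntegrable_iff_integrableOn_Ioc_of_le hv] at this
  · filter_upwards [ae_restrict_mem measurableSet_Ioc] with t ht
    exact Real.rpow_nonneg ht.1.le _

theorem lc (u : ℝ≥0∞) (r : ℝ) (hr : 0 < r) :
    ∫⁻ t in Set.Ioi (0 : ℝ), {t : ℝ | ENNReal.ofReal t < u}.indicator
      (fun t => ENNReal.ofReal (t ^ (r - 1))) t = u ^ r / ENNReal.ofReal r := by
  have hm : MeasurableSet {t : ℝ | ENNReal.ofReal t < u} :=
    measurableSet_lt ENNReal.measurable_ofReal measurable_const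
  have key : ∀ v : NNReal, ∫⁻ t in Set.Ioi (0 : ℝ), {t : ℝ | ENNReal.ofReal t < v}.indicator
      (fun t => ENNReal.ofReal (t ^ (r - 1))) t = (v : ℝ≥0∞) ^ r / ENNReal.ofReal r := by
    intro v
    have hm : MeasurableSet {t : ℝ | ENNReal.ofReal t < v} :=
      measurableSet_lt ENNReal.measurable_ofReal measurable_const
    rw [setLIntegral_indicator hm]
    have : {t : ℝ | ENNReal.ofReal t < v} ∩ Set.Ioi 0 = Set.Ioo 0 (v : ℝ) := by
      ext t
      simp only [Set.mem_inter_iff, Set.mem_ofPred_eq, Set.mem_Ioi, Set.mem_Ioo]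
      constructor
      · rintro ⟨h, h0⟩
        refine ⟨h0, ?_⟩
        rw [← ENNReal.ofReal_coe_nnreal] at h
        exact (ENNReal.ofReal_lt_ofReal_iff_of_nonneg h0.le).1 h
      · rintro ⟨h0, h⟩
        refine ⟨?_, h0⟩
        rw [← ENNReal.ofReal_coe_nnreal]
        exact (ENNReal.ofReal_lt_ofReal_iff_of_nonneg h0.le).2 h
    rw [this, setLIntegral_congr Ioo_ae_eq_Ioc, lc_real _ v.coe_nonneg r hr,
      ENNReal.ofReal_div_of_pos hr, ← ENNReal.ofReal_coe_nnreal,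
      ENNReal.ofReal_rpow_of_nonneg v.coe_nonneg hr.le]
  by_cases hu : u = ∞
  · subst hu
    rw [ENNReal.top_rpow_of_pos hr, ENNReal.top_div_of_ne_top ENNReal.ofReal_ne_top]
    apply ENNReal.eq_top_of_forall_nnreal_le
    intro c
    let v : NNReal := (c * r.toNNReal) ^ (1 / r)
    calc (c : ℝ≥0∞) = (v : ℝ≥0∞) ^ r / ENNReal.ofReal r := by
          rw [← ENNReal.coe_rpow_of_nonneg _ hr.le, ← NNReal.rpow_mul, one_div_mul_cancel hr.ne',
            NNReal.rpow_one, ENNReal.coe_mul, ENNReal.ofReal, ENNReal.mul_div_cancel_right]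
          · simpa using hr
          · exact ENNReal.coe_ne_top
      _ ≤ _ := by
          rw [← key v]
          gcongr
          simp
  · lift u to NNReal using hu
    exact key u

theorem MF_strong {d : ℕ} (hd : 1 ≤ d) (r : ℝ) (hr : 1 < r) :
    ∃ C : ℝ≥0∞, C ≠ ∞ ∧ ∀ f : EuclideanSpace ℝ (Fin d) → ℝ≥0∞, Measurable f →
      ∫⁻ x, MF f x ^ r ≤ C * ∫⁻ x, f x ^ r := by
  have hr0 : ENNReal.ofReal r ≠ 0 := by simp; linarith
  have hr1 : ENNReal.ofReal (r - 1) ≠ 0 := by simp; linarith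
  refine ⟨ENNReal.ofReal r * (2 * 5 ^ d * (2 ^ (r - 1) / ENNReal.ofReal (r - 1))), ?_, ?_⟩
  · refine ENNReal.mul_ne_top ENNReal.ofReal_ne_top (ENNReal.mul_ne_top (by finiteness) ?_)
    exact ENNReal.div_ne_top (by finiteness) hr1
  intro f hf
  have hweak : ∀ t : ℝ, 0 < t → volume {x | ENNReal.ofReal t < MF f x} ≤
      ENNReal.ofReal t⁻¹ * (2 * 5 ^ d * ∫⁻ x, {y | ENNReal.ofReal (t / 2) < f y}.indicator f x) := by
    intro t ht
    have h := MF_weak hd ({y | ENNReal.ofReal (t / 2) < f y}.indicator f) (ENNReal.ofReal (t / 2))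
      (by simpa using ht) ENNReal.ofReal_ne_top
    have hsub : {x | ENNReal.ofReal t < MF f x} ⊆
        {x | ENNReal.ofReal (t / 2) < MF ({y | ENNReal.ofReal (t / 2) < f y}.indicator f) x} := by
      intro x hx
      simp only [Set.mem_ofPred_eq] at hx ⊢
      by_contra hcon
      push Not at hcon
      have h2 := (MF_trunc f (ENNReal.ofReal (t / 2)) x).trans (add_le_add_left hcon _)
      rw [← ENNReal.ofReal_add (by positivity) (by positivity), add_halves] at h2
      exact absurd hx (not_lt.2 h2)
    have h2 : ENNReal.ofReal t⁻¹ * 2 * ENNReal.ofReal (t / 2) = 1 := by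
      rw [show (2 : ℝ≥0∞) = ENNReal.ofReal 2 by simp, ← ENNReal.ofReal_mul (by positivity),
        ← ENNReal.ofReal_mul (by positivity)]
      rw [show t⁻¹ * 2 * (t / 2) = 1 by field_simp]
      simp
    calc volume {x | ENNReal.ofReal t < MF f x} ≤ _ := measure_mono hsub
      _ = ENNReal.ofReal t⁻¹ * 2 * (ENNReal.ofReal (t / 2) *  volume {x | ENNReal.ofReal (t / 2) <
          MF ({y | ENNReal.ofReal (t / 2) < f y}.indicator f) x}) := by
          rw [← mul_assoc, h2, one_mul]
      _ ≤ ENNReal.ofReal t⁻¹ * 2 * (5 ^ d *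
          ∫⁻ x, {y | ENNReal.ofReal (t / 2) < f y}.indicator f x) := by gcongr
      _ = _ := by ring
  have hM := measurable_MF f
  calc ∫⁻ x, MF f x ^ r = ∫⁻ x, ENNReal.ofReal r * ∫⁻ t in Set.Ioi (0 : ℝ),
        {t : ℝ | ENNReal.ofReal t < MF f x}.indicator (fun t => ENNReal.ofReal (t ^ (r - 1))) t := by
        congr 1; ext x
        rw [lc _ r (by linarith), ENNReal.mul_div_cancel hr0 ENNReal.ofReal_ne_top]
    _ = ENNReal.ofReal r * ∫⁻ t in Set.Ioi (0 : ℝ), ∫⁻ x,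
        {x | ENNReal.ofReal t < MF f x}.indicator (fun _ => ENNReal.ofReal (t ^ (r - 1))) x := by
        rw [lintegral_const_mul' _ _ ENNReal.ofReal_ne_top, lintegral_lintegral_swap]
        · rfl
        · apply Measurable.aemeasurable
          have : MeasurableSet {z : EuclideanSpace ℝ (Fin d) × ℝ | ENNReal.ofReal z.2 < MF f z.1} :=
            measurableSet_lt (ENNReal.measurable_ofReal.comp measurable_snd) (hM.comp measurable_fst)
          exact Measurable.indicator (f := fun z : EuclideanSpace ℝ (Fin d) × ℝ =>
            ENNReal.ofReal (z.2 ^ (r - 1))) (by fun_prop) this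
    _ = ENNReal.ofReal r * ∫⁻ t in Set.Ioi (0 : ℝ),
        ENNReal.ofReal (t ^ (r - 1)) * volume {x | ENNReal.ofReal t < MF f x} := by
        congr 2; ext t
        rw [lintegral_indicator (measurableSet_lt measurable_const hM), setLIntegral_const]
    _ ≤ ENNReal.ofReal r * ∫⁻ t in Set.Ioi (0 : ℝ), 2 * 5 ^ d * ∫⁻ x,
          {y | ENNReal.ofReal (t / 2) < f y}.indicator
            (fun x => ENNReal.ofReal (t ^ (r - 1 - 1)) * f x) x := by
        gcongr ENNReal.ofReal r * ?_
        apply setLIntegral_mono' measurableSet_Ioi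
        intro t ht
        have ht : 0 < t := ht
        calc _ ≤ ENNReal.ofReal (t ^ (r - 1)) * (ENNReal.ofReal t⁻¹ * (2 * 5 ^ d *
              ∫⁻ x, {y | ENNReal.ofReal (t / 2) < f y}.indicator f x)) := by
              gcongr; exact hweak t ht
          _ = 2 * 5 ^ d * (ENNReal.ofReal (t ^ (r - 1 - 1)) *
              ∫⁻ x, {y | ENNReal.ofReal (t / 2) < f y}.indicator f x) := by
              rw [← mul_assoc, ← ENNReal.ofReal_mul (by positivity), Real.rpow_sub_one ht.ne' (r - 1),
                ← div_eq_mul_inv]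
              ring
          _ = _ := by
              rw [← lintegral_const_mul' _ _ ENNReal.ofReal_ne_top]
              congr 2; ext x
              simp only [Set.indicator_apply]
              split_ifs <;> simp
    _ = ENNReal.ofReal r * (2 * 5 ^ d * ∫⁻ x, f x * ∫⁻ t in Set.Ioi (0 : ℝ),
          {t : ℝ | ENNReal.ofReal t < 2 * f x}.indicator
            (fun t => ENNReal.ofReal (t ^ (r - 1 - 1))) t) := by
        rw [lintegral_const_mul' _ _ (by finiteness), lintegral_lintegral_swap]
        · congr 3; ext x
          rw [← lintegral_const_mul]
          · apply setLIntegral_congr_fun measurableSet_Ioi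
            intro t ht
            have : ENNReal.ofReal (t / 2) < f x ↔ ENNReal.ofReal t < 2 * f x := by
              rw [ENNReal.ofReal_div_of_pos (by norm_num), ENNReal.div_lt_iff (by simp) (by simp),
                mul_comm]
              simp
            simp only [Set.indicator_apply, Set.mem_ofPred_eq, this]
            split_ifs
            · ring
            · simp
          · exact Measurable.indicator (by fun_prop)
              (measurableSet_lt ENNReal.measurable_ofReal measurable_const)
        · apply Measurable.aemeasurable
          have : MeasurableSet {z : ℝ × EuclideanSpace ℝ (Fin d) | ENNReal.ofReal (z.1 / 2) < f z.2} :=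
            measurableSet_lt (by fun_prop) (hf.comp measurable_snd)
          exact Measurable.indicator (f := fun z : ℝ × EuclideanSpace ℝ (Fin d) =>
            ENNReal.ofReal (z.1 ^ (r - 1 - 1)) * f z.2) (by fun_prop) this
    _ = _ := by
        rw [mul_assoc (ENNReal.ofReal r), mul_assoc (2 * 5 ^ d)]
        congr 2
        rw [← lintegral_const_mul _ (by fun_prop)]
        congr 1; ext x
        rw [lc _ (r - 1) (by linarith), ENNReal.mul_rpow_of_nonneg _ _ (by linarith)]
        rw [div_eq_mul_inv, div_eq_mul_inv]
        have : f x ^ r = f x * f x ^ (r - 1) := by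
          conv_rhs => rw [← ENNReal.rpow_one (f x), ← ENNReal.rpow_mul, one_mul,
            ← ENNReal.rpow_add_of_nonneg _ _ (by norm_num) (by linarith)]
          congr 1; ring
        rw [this]; ring

theorem lint_scale {d : ℕ} (g : EuclideanSpace ℝ (Fin d) → ℝ≥0∞) (hg : Measurable g)
    (x : EuclideanSpace ℝ (Fin d)) (t : ℝ) (ht : 0 < t) :
    ∫⁻ y, g (x - t • y) = ENNReal.ofReal (t ^ d)⁻¹ * ∫⁻ y, g y := by
  have h := Measure.map_addHaar_smul (volume : Measure (EuclideanSpace ℝ (Fin d))) ht.ne'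
  have h2 : ∫⁻ y, g (x - y) ∂(Measure.map (t • ·) (volume : Measure (EuclideanSpace ℝ (Fin d)))) =
      ∫⁻ y, g (x - t • y) := by
    rw [lintegral_map (by fun_prop) (by fun_prop)]
  rw [← h2, h, lintegral_smul_measure, lintegral_sub_left_eq_self]
  simp [abs_of_pos (pow_pos ht d)]

theorem ker_MF {d : ℕ} (K : SchwartzMap (EuclideanSpace ℝ (Fin d)) ℂ) :
    ∃ C : ℝ≥0∞, C ≠ ∞ ∧ ∀ f : EuclideanSpace ℝ (Fin d) → ℝ≥0∞, Measurable f → ∀ x, ∀ t : ℝ, 0 < t →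
      ∫⁻ y, ‖K y‖ₑ * f (x - t • y) ≤ C * MF f x := by
  obtain ⟨C0, hC0, h0⟩ := K.decay 0 0
  obtain ⟨C1, hC1, h1⟩ := K.decay (d + 1) 0
  simp only [pow_zero, one_mul, norm_iteratedFDeriv_zero] at h0 h1
  set c := max C0 (C1 * 2 ^ (d + 1)) with hc
  have hc0 : 0 ≤ c := le_max_of_le_left hC0.le
  set v := volume (Metric.ball (0 : EuclideanSpace ℝ (Fin d)) 1) with hv
  have hv1 : v ≠ ∞ := measure_ball_lt_top.ne
  have hpt : ∀ y, ‖K y‖ₑ ≤ ∑' k : ℕ, ENNReal.ofReal (c * ((2 : ℝ) ^ (k * (d + 1)))⁻¹) *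
      (Metric.ball (0 : EuclideanSpace ℝ (Fin d)) (2 ^ k)).indicator (fun _ => 1) y := by
    intro y
    have hex : ∃ k : ℕ, ‖y‖ < 2 ^ k := pow_unbounded_of_one_lt _ (by norm_num)
    classical
    let k := Nat.find hex
    have hk : ‖y‖ < 2 ^ k := Nat.find_spec hex
    refine le_trans ?_ (ENNReal.le_tsum k)
    rw [Set.indicator_of_mem (by simpa using hk), mul_one, ← ofReal_norm]
    apply ENNReal.ofReal_le_ofReal
    rcases Nat.eq_zero_or_pos k with h | h
    · rw [h]; simpa only [zero_mul, pow_zero, inv_one, mul_one] using (h0 y).trans (le_max_left _ _)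
    · obtain ⟨j, hj⟩ : ∃ j, k = j + 1 := ⟨k - 1, by omega⟩
      have hjy : (2 : ℝ) ^ j ≤ ‖y‖ := by
        have := Nat.find_min hex (m := j) (by change j < k; omega)
        simpa using this
      have h2 : ((2 : ℝ) ^ j) ^ (d + 1) * ‖K y‖ ≤ C1 := by
        refine le_trans ?_ (h1 y)
        gcongr
      rw [hj, ← div_eq_mul_inv, le_div_iff₀ (by positivity)]
      calc ‖K y‖ * 2 ^ ((j + 1) * (d + 1)) = ((2 : ℝ) ^ j) ^ (d + 1) * ‖K y‖ * 2 ^ (d + 1) := by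
            rw [← pow_mul, add_mul, pow_add]; ring
        _ ≤ C1 * 2 ^ (d + 1) := by gcongr
        _ ≤ c := le_max_right _ _
  refine ⟨ENNReal.ofReal (c * 2) * v, ENNReal.mul_ne_top ENNReal.ofReal_ne_top hv1, ?_⟩
  intro f hf x t ht
  have hball : ∀ R : ℝ, 0 < R → ∫⁻ y, (Metric.ball (0 : EuclideanSpace ℝ (Fin d)) R).indicator
      (fun _ => 1) y * f (x - t • y) ≤ ENNReal.ofReal (R ^ d) * v * MF f x := by
    intro R hR
    have e : ∀ y, (Metric.ball (0 : EuclideanSpace ℝ (Fin d)) R).indicator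
      (fun _ => 1) y * f (x - t • y) = (Metric.ball x (t * R)).indicator f (x - t • y) := by
      intro y
      have : y ∈ Metric.ball (0 : EuclideanSpace ℝ (Fin d)) R ↔
          x - t • y ∈ Metric.ball x (t * R) := by
        simp [dist_eq_norm, norm_smul, abs_of_pos ht, ht]
      classical
      simp only [Set.indicator_apply, this]
      split_ifs <;> simp
    simp_rw [e]
    rw [lint_scale _ (hf.indicator measurableSet_ball) x t ht,
      lintegral_indicator measurableSet_ball]
    calc _ ≤ ENNReal.ofReal (t ^ d)⁻¹ * (volume (Metric.ball x (t * R)) * MF f x) := by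
          gcongr
          exact ball_le_MF f x _ (by positivity)
      _ = _ := by
          rw [Measure.addHaar_ball_of_pos _ _ (by positivity), ← mul_assoc, ← mul_assoc,
            ← ENNReal.ofReal_mul (by positivity)]
          congr 3
          simp [mul_pow]; field_simp
  calc ∫⁻ y, ‖K y‖ₑ * f (x - t • y) ≤ ∫⁻ y, ∑' k : ℕ, ENNReal.ofReal (c * ((2 : ℝ) ^ (k * (d + 1)))⁻¹) *
      ((Metric.ball (0 : EuclideanSpace ℝ (Fin d)) (2 ^ k)).indicator (fun _ => 1) y *
        f (x - t • y)) := by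
        apply lintegral_mono
        intro y
        calc _ ≤ (∑' k : ℕ, ENNReal.ofReal (c * ((2 : ℝ) ^ (k * (d + 1)))⁻¹) *
                (Metric.ball (0 : EuclideanSpace ℝ (Fin d)) (2 ^ k)).indicator (fun _ => 1) y) *
                f (x - t • y) := by
              simp only
              gcongr
              exact hpt y
          _ = _ := by
              rw [← ENNReal.tsum_mul_right]; simp only [mul_assoc]
    _ = ∑' k : ℕ, ENNReal.ofReal (c * ((2 : ℝ) ^ (k * (d + 1)))⁻¹) * ∫⁻ y,
      ((Metric.ball (0 : EuclideanSpace ℝ (Fin d)) (2 ^ k)).indicator (fun _ => 1) y *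
        f (x - t • y)) := by
        have hmeas : ∀ k : ℕ, Measurable fun y => (Metric.ball (0 : EuclideanSpace ℝ (Fin d))
            (2 ^ k)).indicator (fun _ => (1 : ℝ≥0∞)) y * f (x - t • y) := by
          intro k
          exact (measurable_const.indicator measurableSet_ball).mul (by fun_prop)
        rw [lintegral_tsum (fun k => ((hmeas k).const_mul _).aemeasurable)]
        congr 1; ext k
        rw [lintegral_const_mul _ (hmeas k)]
    _ ≤ ∑' k : ℕ, ENNReal.ofReal (c * ((2 : ℝ) ^ (k * (d + 1)))⁻¹) *
        (ENNReal.ofReal (((2 : ℝ) ^ k) ^ d) * v * MF f x) := by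
        gcongr with k
        exact hball _ (by positivity)
    _ = ∑' k : ℕ, ENNReal.ofReal (c * (1 / 2) ^ k) * (v * MF f x) := by
        congr 1; ext k
        rw [← mul_assoc, ← mul_assoc, ← ENNReal.ofReal_mul (by positivity), mul_assoc]
        congr 2
        rw [mul_add, pow_add, ← pow_mul, one_div, inv_pow]
        rw [mul_one]; field_simp
    _ = _ := by
        rw [ENNReal.tsum_mul_right, ← ENNReal.ofReal_tsum_of_nonneg (fun k => by positivity)
          (summable_geometric_two.mul_left c), tsum_mul_left, tsum_geometric_two, mul_assoc]

theorem ker_Lp {d : ℕ} (K : SchwartzMap (EuclideanSpace ℝ (Fin d)) ℂ) (q : ℝ) (hq : 1 < q) :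
    ∃ C : ℝ≥0∞, C ≠ ∞ ∧ ∀ f : EuclideanSpace ℝ (Fin d) → ℝ≥0∞, Measurable f → ∀ x, ∀ t : ℝ, 0 < t →
      ∫⁻ y, ‖K y‖ₑ * f (x - t • y) ≤ C * (ENNReal.ofReal (t ^ (-(d / q))) *
        (∫⁻ y, f y ^ q) ^ (1 / q)) := by
  have hpq := (Real.HolderConjugate.conjExponent hq).symm
  set q' := q.conjExponent
  have hq'0 : 0 < q' := hpq.pos
  refine ⟨(∫⁻ y, ‖K y‖ₑ ^ q') ^ (1 / q'), ?_, ?_⟩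
  · have h := K.memLp (ENNReal.ofReal q') volume
    have h2 := h.2.ne
    rw [eLpNorm_eq_lintegral_rpow_enorm_toReal (by simpa using hq'0) (by simp),
      ENNReal.toReal_ofReal hq'0.le] at h2
    exact h2
  intro f hf x t ht
  refine (ENNReal.lintegral_mul_le_Lp_mul_Lq volume hpq (by fun_prop) (by fun_prop)).trans ?_
  gcongr
  rw [lint_scale (fun y => f y ^ q) (by fun_prop) x t ht,
    ENNReal.mul_rpow_of_nonneg _ _ (by positivity),
    ENNReal.ofReal_rpow_of_pos (by positivity)]
  gcongr
  rw [← Real.rpow_natCast, ← Real.rpow_neg ht.le, ← Real.rpow_mul ht.le]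
  apply le_of_eq
  congr 1
  ring

theorem ker_mix {d : ℕ} (K : SchwartzMap (EuclideanSpace ℝ (Fin d)) ℂ) (q : ℝ) (hq : 1 < q)
    (τ : ℝ) (hτ0 : 0 ≤ τ) (hτ1 : τ ≤ 1) :
    ∃ C : ℝ≥0∞, C ≠ ∞ ∧ ∀ f : EuclideanSpace ℝ (Fin d) → ℝ≥0∞, Measurable f → ∀ x, ∀ t : ℝ, 0 < t →
      ∫⁻ y, ‖K y‖ₑ * f (x - t • y) ≤ ENNReal.ofReal (t ^ (-(d / q) * (1 - τ))) *
        (C * (MF f x ^ τ * ((∫⁻ y, f y ^ q) ^ (1 / q)) ^ (1 - τ))) := by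
  obtain ⟨C1, hC1, h1⟩ := ker_MF K
  obtain ⟨C2, hC2, h2⟩ := ker_Lp K q hq
  have hτ2 : 0 ≤ 1 - τ := by linarith
  refine ⟨C1 ^ τ * C2 ^ (1 - τ), by finiteness, ?_⟩
  intro f hf x t ht
  set u := ∫⁻ y, ‖K y‖ₑ * f (x - t • y)
  calc u = u ^ τ * u ^ (1 - τ) := by
        rw [← ENNReal.rpow_add_of_nonneg _ _ hτ0 hτ2]; simp
    _ ≤ (C1 * MF f x) ^ τ * (C2 * (ENNReal.ofReal (t ^ (-(d / q))) *
        (∫⁻ y, f y ^ q) ^ (1 / q))) ^ (1 - τ) := by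
        gcongr
        · exact h1 f hf x t ht
        · exact h2 f hf x t ht
    _ = _ := by
        rw [ENNReal.mul_rpow_of_nonneg _ _ hτ0, ENNReal.mul_rpow_of_nonneg _ _ hτ2,
          ENNReal.mul_rpow_of_nonneg _ _ hτ2, ENNReal.ofReal_rpow_of_pos (by positivity),
          ← Real.rpow_mul ht.le]
        ring

theorem min_int (l e : ℝ) (hl : 0 < l) (he : 0 < e) (θ : ℝ) (hθ : θ = l / (l + e)) (X Y : ℝ≥0∞)
    (h : ℝ → ℝ≥0∞) (h1 : ∀ t, 0 < t → h t ≤ ENNReal.ofReal (t ^ (-l)) * X)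
    (h2 : ∀ t, 0 < t → h t ≤ ENNReal.ofReal (t ^ e) * Y) :
    ∫⁻ t in Set.Ioi (0 : ℝ), ENNReal.ofReal t⁻¹ * h t ≤
      ENNReal.ofReal (1 / e + 1 / l) * (X ^ (1 - θ) * Y ^ θ) := by
  have hθ0 : 0 < θ := by rw [hθ]; positivity
  have hθ1 : 0 < 1 - θ := by
    rw [hθ, one_sub_div (by positivity)]; simp; positivity
  have hz : (∀ t, 0 < t → h t = 0) → ∫⁻ t in Set.Ioi (0 : ℝ), ENNReal.ofReal t⁻¹ * h t = 0 := by
    intro hh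
    rw [← lintegral_zero (μ := volume.restrict (Set.Ioi (0 : ℝ)))]
    apply setLIntegral_congr_fun measurableSet_Ioi
    intro t ht
    simp [hh t ht]
  have hc : ENNReal.ofReal (1 / e + 1 / l) ≠ 0 := by
    simp; positivity
  by_cases hX0 : X = 0
  · rw [hz]
    · exact zero_le
    · intro t ht; simpa [hX0] using h1 t ht
  by_cases hY0 : Y = 0
  · rw [hz]
    · exact zero_le
    · intro t ht; simpa [hY0] using h2 t ht
  by_cases hX : X = ∞
  · rw [hX, ENNReal.top_rpow_of_pos hθ1, ENNReal.top_mul (by simp [hY0, hθ0.le, hθ0]),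
      ENNReal.mul_top hc]
    exact le_top
  by_cases hY : Y = ∞
  · rw [hY, ENNReal.top_rpow_of_pos hθ0, ENNReal.mul_top (by simp [hX0, hX, hθ1]),
      ENNReal.mul_top hc]
    exact le_top
  obtain ⟨x, hx, rfl⟩ : ∃ x : ℝ, 0 < x ∧ X = ENNReal.ofReal x :=
    ⟨X.toReal, ENNReal.toReal_pos hX0 hX, (ENNReal.ofReal_toReal hX).symm⟩
  obtain ⟨y, hy, rfl⟩ : ∃ x : ℝ, 0 < x ∧ Y = ENNReal.ofReal x :=
    ⟨Y.toReal, ENNReal.toReal_pos hY0 hY, (ENNReal.ofReal_toReal hY).symm⟩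
  set T := (x / y) ^ (1 / (l + e)) with hT
  have hTpos : 0 < T := by positivity
  have hTe : T ^ e * y = x ^ (1 - θ) * y ^ θ := by
    rw [hT, ← Real.rpow_mul (by positivity), Real.div_rpow hx.le hy.le]
    have e1 : 1 / (l + e) * e = 1 - θ := by rw [hθ]; field_simp; ring
    rw [e1, Real.rpow_sub hy]
    simp; field_simp
  have hTl : T ^ (-l) * x = x ^ (1 - θ) * y ^ θ := by
    rw [hT, ← Real.rpow_mul (by positivity), Real.div_rpow hx.le hy.le]
    have e1 : 1 / (l + e) * (-l) = - θ := by rw [hθ]; field_simp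
    rw [e1, Real.rpow_neg hy.le, Real.rpow_neg hx.le, Real.rpow_sub hx]
    simp; field_simp
  rw [← Set.Ioc_union_Ioi_eq_Ioi hTpos.le, lintegral_union measurableSet_Ioi
    (Set.Ioc_disjoint_Ioi le_rfl)]
  have A : ∫⁻ t in Set.Ioc 0 T, ENNReal.ofReal t⁻¹ * h t ≤
      ENNReal.ofReal (1 / e * (x ^ (1 - θ) * y ^ θ)) := by
    calc _ ≤ ∫⁻ t in Set.Ioc 0 T, ENNReal.ofReal (t ^ (e - 1)) * ENNReal.ofReal y := by
          apply setLIntegral_mono' measurableSet_Ioc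
          intro t ht
          have ht0 : 0 < t := ht.1
          calc _ ≤ ENNReal.ofReal t⁻¹ * (ENNReal.ofReal (t ^ e) * ENNReal.ofReal y) := by
                gcongr; exact h2 t ht0
            _ = _ := by
                rw [← mul_assoc, ← ENNReal.ofReal_mul (by positivity), Real.rpow_sub_one ht0.ne',
                  div_eq_inv_mul]
      _ = _ := by
          rw [lintegral_mul_const' _ _ ENNReal.ofReal_ne_top, lc_real T hTpos.le e he,
            ← ENNReal.ofReal_mul (by positivity), ← hTe]
          congr 1; ring
  have B : ∫⁻ t in Set.Ioi T, ENNReal.ofReal t⁻¹ * h t ≤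
      ENNReal.ofReal (1 / l * (x ^ (1 - θ) * y ^ θ)) := by
    calc _ ≤ ∫⁻ t in Set.Ioi T, ENNReal.ofReal (t ^ (-l - 1)) * ENNReal.ofReal x := by
          apply setLIntegral_mono' measurableSet_Ioi
          intro t ht
          have ht0 : 0 < t := hTpos.trans ht
          calc _ ≤ ENNReal.ofReal t⁻¹ * (ENNReal.ofReal (t ^ (-l)) * ENNReal.ofReal x) := by
                gcongr; exact h1 t ht0
            _ = _ := by
                rw [← mul_assoc, ← ENNReal.ofReal_mul (by positivity), Real.rpow_sub_one ht0.ne',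
                  div_eq_inv_mul]
      _ = _ := by
          rw [lintegral_mul_const' _ _ ENNReal.ofReal_ne_top, ← ofReal_integral_eq_lintegral_ofReal
            (integrableOn_Ioi_rpow_of_lt (by linarith) hTpos),
            integral_Ioi_rpow_of_lt (by linarith) hTpos, ← ENNReal.ofReal_mul', ← hTl]
          · congr 1
            rw [show -l - 1 + 1 = -l by ring]
            field_simp
          · exact hx.le
          · filter_upwards [ae_restrict_mem measurableSet_Ioi] with t ht
            exact Real.rpow_nonneg (hTpos.trans ht).le _
  refine (add_le_add A B).trans (le_of_eq ?_)
  rw [← ENNReal.ofReal_add (by positivity) (by positivity), ENNReal.ofReal_rpow_of_pos hx,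
    ENNReal.ofReal_rpow_of_pos hy, ← ENNReal.ofReal_mul (by positivity),
    ← ENNReal.ofReal_mul (by positivity)]
  congr 1; ring

/-- A smooth bump on the line, supported in `(1, 3)`. -/
def etaB : ContDiffBump (2 : ℝ) := ⟨1 / 2, 1, by norm_num, by norm_num⟩

/-- The bump as a function. -/
def eta (u : ℝ) : ℝ := etaB u

theorem eta_nonneg (u : ℝ) : 0 ≤ eta u := etaB.nonneg
theorem eta_le_one (u : ℝ) : eta u ≤ 1 := etaB.le_one
theorem eta_contDiff : ContDiff ℝ ((⊤ : ℕ∞) : WithTop ℕ∞) eta := etaB.contDiff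
theorem eta_zero (u : ℝ) (hu : u ≤ 1 ∨ 3 ≤ u) : eta u = 0 := by
  apply etaB.zero_of_le_dist
  change 1 ≤ dist u 2
  rw [Real.dist_eq, le_abs]
  rcases hu with h | h
  · right; linarith
  · left; linarith
theorem eta_one (u : ℝ) (hu : 3 / 2 ≤ u) (hu' : u ≤ 5 / 2) : eta u = 1 := by
  apply etaB.one_of_mem_closedBall
  change dist u 2 ≤ 1 / 2
  rw [Real.dist_eq, abs_le]
  constructor <;> linarith

theorem sym_schwartz (d : ℕ) (α : ℝ) : ∃ m : SchwartzMap (EuclideanSpace ℝ (Fin d)) ℂ,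
    ∀ ξ, m ξ = ((eta (‖ξ‖ ^ 2) * ‖ξ‖ ^ α : ℝ) : ℂ) := by
  have hg : ContDiff ℝ ((⊤ : ℕ∞) : WithTop ℕ∞) (fun u : ℝ => eta u * u ^ (α / 2)) := by
    rw [contDiff_iff_contDiffAt]
    intro u
    by_cases hu : u = 0
    · have : (fun u : ℝ => eta u * u ^ (α / 2)) =ᶠ[nhds u] fun _ => 0 := by
        rw [hu]
        filter_upwards [Iio_mem_nhds (show (0 : ℝ) < 1 by norm_num)] with v hv
        rw [eta_zero v (Or.inl hv.le), zero_mul]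
      exact contDiffAt_const.congr_of_eventuallyEq this
    · exact eta_contDiff.contDiffAt.mul (Real.contDiffAt_rpow_const_of_ne hu)
  have e : ∀ ξ : EuclideanSpace ℝ (Fin d),
      eta (‖ξ‖ ^ 2) * (‖ξ‖ ^ 2) ^ (α / 2) = eta (‖ξ‖ ^ 2) * ‖ξ‖ ^ α := by
    intro ξ
    rw [← Real.rpow_natCast, ← Real.rpow_mul (norm_nonneg _)]
    congr 2; push_cast; ring
  have h2 : ContDiff ℝ ((⊤ : ℕ∞) : WithTop ℕ∞) (fun ξ : EuclideanSpace ℝ (Fin d) =>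
      ((eta (‖ξ‖ ^ 2) * ‖ξ‖ ^ α : ℝ) : ℂ)) := by
    simp_rw [← e]
    exact Complex.ofRealCLM.contDiff.comp (hg.comp (contDiff_norm_sq ℝ))
  have h1 : HasCompactSupport (fun ξ : EuclideanSpace ℝ (Fin d) =>
      ((eta (‖ξ‖ ^ 2) * ‖ξ‖ ^ α : ℝ) : ℂ)) := by
    apply HasCompactSupport.intro (isCompact_closedBall (0 : EuclideanSpace ℝ (Fin d)) 2)
    intro ξ hξ
    rw [eta_zero]
    · simp
    · right
      simp at hξ
      nlinarith
  exact ⟨h1.toSchwartzMap h2, fun ξ => rfl⟩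

/-- The function whose integral normalizes the decomposition. -/
def gfun (u : ℝ) : ℝ := eta (u ^ 2) * u⁻¹

theorem gfun_nonneg (u : ℝ) (hu : 0 < u) : 0 ≤ gfun u :=
  mul_nonneg (eta_nonneg _) (by positivity)

theorem gfun_int : IntegrableOn gfun (Set.Ioi 0) := by
  have hm : Measurable gfun := by
    have := eta_contDiff.continuous.measurable
    unfold gfun; fun_prop
  have hi : Integrable ((Set.Icc (1 : ℝ) 2).indicator (fun _ => (1 : ℝ))) :=
    (integrable_indicator_iff measurableSet_Icc).2 (by simp)
  refine Integrable.mono' (hi.integrableOn (s := Set.Ioi 0)) hm.aestronglyMeasurable ?_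
  filter_upwards [ae_restrict_mem measurableSet_Ioi] with u hu
  have hu : 0 < u := hu
  rw [Real.norm_of_nonneg (gfun_nonneg u hu)]
  by_cases h : u ∈ Set.Icc (1 : ℝ) 2
  · rw [Set.indicator_of_mem h]
    exact mul_le_one₀ (eta_le_one _) (by positivity) (inv_le_one_of_one_le₀ h.1)
  · rw [Set.indicator_of_notMem h, gfun, eta_zero, zero_mul]
    rw [Set.mem_Icc, not_and_or] at h
    rcases h with h | h
    · left; nlinarith
    · right; nlinarith

theorem gfun_pos : 0 < ∫ u in Set.Ioi 0, gfun u := by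
  rw [setIntegral_pos_iff_support_of_nonneg_ae _ gfun_int]
  · refine lt_of_lt_of_le ?_ (measure_mono (s := Set.Ioo (1.3 : ℝ) 1.5) ?_)
    · simp; norm_num
    · intro u hu
      have h1 : 0 < u := by linarith [hu.1]
      refine ⟨?_, h1⟩
      rw [Function.mem_support, gfun, eta_one]
      · positivity
      · nlinarith [hu.1, hu.2]
      · nlinarith [hu.1, hu.2]
  · filter_upwards [ae_restrict_mem measurableSet_Ioi] with u hu
    exact gfun_nonneg u hu

theorem gfun_scale (b : ℝ) (hb : 0 < b) :
    IntegrableOn (fun t => t⁻¹ * eta ((t * b) ^ 2)) (Set.Ioi 0) ∧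
    ∫ t in Set.Ioi 0, t⁻¹ * eta ((t * b) ^ 2) = ∫ u in Set.Ioi 0, gfun u := by
  have e : (fun t => t⁻¹ * eta ((t * b) ^ 2)) = fun t => b * gfun (t * b) := by
    ext t; unfold gfun; field_simp
  rw [e]
  constructor
  · apply Integrable.const_mul
    have := (integrableOn_Ioi_comp_mul_right_iff gfun 0 hb).2 (by simpa using gfun_int)
    exact this
  · rw [integral_const_mul, integral_comp_mul_right_Ioi _ _ hb]
    simp; field_simp

open Real in
theorem ker_id {d : ℕ} (m : SchwartzMap (EuclideanSpace ℝ (Fin d)) ℂ)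
    (w : EuclideanSpace ℝ (Fin d) → ℂ) (hw : Integrable w) (t : ℝ) (x : EuclideanSpace ℝ (Fin d)) :
    𝓕⁻ (fun ξ => m (t • ξ) * w ξ) x = ∫ y, (𝓕⁻ m : SchwartzMap _ ℂ) y * 𝓕⁻ w (x - t • y) := by
  set K : SchwartzMap (EuclideanSpace ℝ (Fin d)) ℂ := 𝓕⁻ m with hK
  have hm : m = 𝓕 K := by rw [hK]; simp
  have hmv : ∀ ξ, m ξ = ∫ y, 𝐞 (-inner ℝ y ξ) • K y := by
    intro ξ
    rw [hm, SchwartzMap.fourier_coe, Real.fourier_eq]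
  have hKi : Integrable (K : EuclideanSpace ℝ (Fin d) → ℂ) := K.integrable
  calc 𝓕⁻ (fun ξ => m (t • ξ) * w ξ) x
      = ∫ ξ, ∫ y, (𝐞 (inner ℝ ξ (x - t • y)) : ℂ) * (w ξ * K y) := by
        rw [Real.fourierInv_eq]
        congr 1; ext ξ
        rw [hmv, Circle.smul_def, smul_eq_mul, mul_comm _ (w ξ), ← mul_assoc,
          ← integral_const_mul]
        congr 1; ext y
        rw [Circle.smul_def, smul_eq_mul, inner_sub_right, sub_eq_add_neg, AddChar.map_add_eq_mul,
          Circle.coe_mul, inner_smul_right, inner_smul_right, real_inner_comm ξ y]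
        ring
    _ = ∫ y, ∫ ξ, (𝐞 (inner ℝ ξ (x - t • y)) : ℂ) * (w ξ * K y) := by
        apply integral_integral_swap
        have h := hw.mul_prod hKi
        refine h.bdd_mul (c := 1) ?_ ?_
        · apply Continuous.aestronglyMeasurable
          fun_prop
        · filter_upwards with z
          exact (Circle.norm_coe _).le
    _ = _ := by
        congr 1; ext y
        rw [Real.fourierInv_eq, ← integral_const_mul]
        congr 1; ext ξ
        rw [Circle.smul_def, smul_eq_mul]; ring

open Real in
theorem rep_bound {d : ℕ} (hd : 1 ≤ d)
    (w : EuclideanSpace ℝ (Fin d) → ℂ) (hw : Integrable w) (x : EuclideanSpace ℝ (Fin d)) :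
    ENNReal.ofReal (∫ u in Set.Ioi 0, gfun u) * ‖𝓕⁻ w x‖ₑ ≤
      ∫⁻ t in Set.Ioi (0 : ℝ), ENNReal.ofReal t⁻¹ *
        ‖𝓕⁻ (fun ξ => ((eta (‖t • ξ‖ ^ 2) : ℝ) : ℂ) * w ξ) x‖ₑ := by
  have : Nonempty (Fin d) := ⟨⟨0, hd⟩⟩
  set c0 := ∫ u in Set.Ioi 0, gfun u with hc0
  have hc0pos : 0 < c0 := gfun_pos
  have heta := eta_contDiff.continuous.measurable
  have hne : ∀ᵐ ξ : EuclideanSpace ℝ (Fin d), ξ ≠ 0 := by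
    have : volume ({0} : Set (EuclideanSpace ℝ (Fin d))) = 0 := measure_singleton 0
    exact measure_eq_zero_iff_ae_notMem.1 this
  let G : EuclideanSpace ℝ (Fin d) → ℝ → ℂ := fun ξ t =>
    ((t⁻¹ * eta ((t * ‖ξ‖) ^ 2) : ℝ) : ℂ) * (𝐞 (inner ℝ ξ x) • w ξ)
  have hGm : AEStronglyMeasurable (Function.uncurry G)
      ((volume : Measure (EuclideanSpace ℝ (Fin d))).prod (volume.restrict (Set.Ioi (0 : ℝ)))) := by
    apply AEStronglyMeasurable.mul
    · apply Measurable.aestronglyMeasurable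
      fun_prop
    · have h1 : AEStronglyMeasurable (fun ξ => 𝐞 (inner ℝ ξ x) • w ξ)
          (volume : Measure (EuclideanSpace ℝ (Fin d))) := by
        apply AEStronglyMeasurable.smul _ hw.1
        apply Continuous.aestronglyMeasurable
        fun_prop
      exact h1.comp_fst
  have hGi : Integrable (Function.uncurry G)
      ((volume : Measure (EuclideanSpace ℝ (Fin d))).prod (volume.restrict (Set.Ioi (0 : ℝ)))) := by
    rw [integrable_prod_iff hGm]
    constructor
    · filter_upwards [hne] with ξ hξ
      exact ((gfun_scale ‖ξ‖ (norm_pos_iff.2 hξ)).1.ofReal (𝕜 := ℂ)).mul_const (𝐞 (inner ℝ ξ x) • w ξ)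
    · refine (hw.norm.const_mul c0).congr ?_
      filter_upwards [hne] with ξ hξ
      rw [hc0, ← (gfun_scale ‖ξ‖ (norm_pos_iff.2 hξ)).2, ← integral_mul_const]
      apply setIntegral_congr_fun measurableSet_Ioi
      intro t ht
      have ht : 0 < t := ht
      simp only [Function.uncurry, G, norm_mul, Complex.norm_real, Circle.norm_smul]
      rw [Real.norm_of_nonneg (inv_nonneg.2 ht.le), Real.norm_of_nonneg (eta_nonneg _)]
  have e1 : (c0 : ℂ) * 𝓕⁻ w x = ∫ ξ, ∫ t in Set.Ioi (0 : ℝ), G ξ t := by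
    rw [Real.fourierInv_eq, ← integral_const_mul]
    apply integral_congr_ae
    filter_upwards [hne] with ξ hξ
    simp only [G]
    rw [integral_mul_const, integral_complex_ofReal, (gfun_scale ‖ξ‖ (norm_pos_iff.2 hξ)).2]
  have e2 : (c0 : ℂ) * 𝓕⁻ w x = ∫ t in Set.Ioi (0 : ℝ), ∫ ξ, G ξ t := by
    rw [e1]; exact integral_integral_swap hGi
  calc ENNReal.ofReal c0 * ‖𝓕⁻ w x‖ₑ = ‖(c0 : ℂ) * 𝓕⁻ w x‖ₑ := by
        rw [enorm_mul, ← ofReal_norm (c0 : ℂ), Complex.norm_real, Real.norm_of_nonneg hc0pos.le]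
    _ ≤ ∫⁻ t in Set.Ioi (0 : ℝ), ‖∫ ξ, G ξ t‖ₑ := by
        rw [e2]; exact enorm_integral_le_lintegral_enorm _
    _ = _ := by
        apply setLIntegral_congr_fun measurableSet_Ioi
        intro t ht
        have ht : 0 < t := ht
        have : ∫ ξ, G ξ t = ((t⁻¹ : ℝ) : ℂ) * 𝓕⁻ (fun ξ => ((eta (‖t • ξ‖ ^ 2) : ℝ) : ℂ) * w ξ) x := by
          rw [Real.fourierInv_eq, ← integral_const_mul]
          congr 1; ext ξ
          simp only [G]
          rw [norm_smul, Real.norm_of_nonneg ht.le, Circle.smul_def, Circle.smul_def, smul_eq_mul,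
            smul_eq_mul]
          push_cast; ring
        simp only
        rw [this, enorm_mul, ← ofReal_norm ((t⁻¹ : ℝ) : ℂ), Complex.norm_real,
          Real.norm_of_nonneg (by positivity)]

/-- bound for one frequency block -/
theorem block_bound {d : ℕ} (α : ℝ) (q : ℝ) (hq : 1 < q)
    (τ : ℝ) (hτ0 : 0 ≤ τ) (hτ1 : τ ≤ 1) :
    ∃ C : ℝ≥0∞, C ≠ ∞ ∧ ∀ w w' : EuclideanSpace ℝ (Fin d) → ℂ, Integrable w' →
      (∀ ξ, ξ ≠ 0 → w ξ = ((‖ξ‖ ^ α : ℝ) : ℂ) * w' ξ) → ∀ x, ∀ t : ℝ, 0 < t →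
      ‖𝓕⁻ (fun ξ => ((eta (‖t • ξ‖ ^ 2) : ℝ) : ℂ) * w ξ) x‖ₑ ≤
        ENNReal.ofReal (t ^ (-α - (d / q) * (1 - τ))) *
        (C * (MF (fun y => ‖𝓕⁻ w' y‖ₑ) x ^ τ * ((∫⁻ y, ‖𝓕⁻ w' y‖ₑ ^ q) ^ (1 / q)) ^ (1 - τ))) := by
  obtain ⟨m, hm⟩ := sym_schwartz d α
  obtain ⟨C, hC, h⟩ := ker_mix (𝓕⁻ m : SchwartzMap (EuclideanSpace ℝ (Fin d)) ℂ) q hq τ hτ0 hτ1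
  refine ⟨C, hC, ?_⟩
  intro w w' hw' hww x t ht
  have hcont : Continuous (𝓕⁻ w') := by
    have : 𝓕⁻ w' = fun x => 𝓕 w' (-x) := by
      ext x; exact Real.fourierInv_eq_fourier_neg w' x
    rw [this]
    have h2 : Continuous (𝓕 w') :=
      VectorFourier.fourierIntegral_continuous Real.continuous_fourierChar
        (by exact continuous_inner) hw'
    fun_prop
  have e : 𝓕⁻ (fun ξ => ((eta (‖t • ξ‖ ^ 2) : ℝ) : ℂ) * w ξ) x =
      ((t ^ (-α) : ℝ) : ℂ) * 𝓕⁻ (fun ξ => m (t • ξ) * w' ξ) x := by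
    rw [Real.fourierInv_eq, Real.fourierInv_eq, ← integral_const_mul]
    congr 1; ext ξ
    rw [hm, Circle.smul_def, Circle.smul_def, smul_eq_mul, smul_eq_mul]
    by_cases hξ : ξ = 0
    · subst hξ
      simp [eta_zero 0 (Or.inl zero_le_one)]
    · rw [hww ξ hξ]
      have : t ^ (-α) * ‖t • ξ‖ ^ α = ‖ξ‖ ^ α := by
        rw [norm_smul, Real.norm_of_nonneg ht.le, Real.mul_rpow ht.le (norm_nonneg _), ← mul_assoc,
          ← Real.rpow_add ht]
        simp
      rw [← this]
      push_cast; ring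
  rw [e, ker_id m w' hw', enorm_mul, ← ofReal_norm ((t ^ (-α) : ℝ) : ℂ), Complex.norm_real,
    Real.norm_of_nonneg (by positivity)]
  calc _ ≤ ENNReal.ofReal (t ^ (-α)) * ∫⁻ y, ‖(𝓕⁻ m : SchwartzMap _ ℂ) y‖ₑ *
        ‖𝓕⁻ w' (x - t • y)‖ₑ := by
        gcongr
        refine (enorm_integral_le_lintegral_enorm _).trans (le_of_eq ?_)
        simp only [enorm_mul]
    _ ≤ ENNReal.ofReal (t ^ (-α)) * (ENNReal.ofReal (t ^ (-(d / q) * (1 - τ))) *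
        (C * (MF (fun y => ‖𝓕⁻ w' y‖ₑ) x ^ τ *
          ((∫⁻ y, ‖𝓕⁻ w' y‖ₑ ^ q) ^ (1 / q)) ^ (1 - τ)))) := by
        gcongr
        exact h (fun y => ‖𝓕⁻ w' y‖ₑ) hcont.enorm.measurable x t ht
    _ = _ := by
        rw [← mul_assoc, ← ENNReal.ofReal_mul (by positivity), ← Real.rpow_add ht]
        congr 3; ring

theorem rpow_integrable {d : ℕ} (α : ℝ) (hα : 0 ≤ α)
    (φ : SchwartzMap (EuclideanSpace ℝ (Fin d)) ℂ) :
    Integrable (fun ξ => (‖ξ‖ ^ α : ℝ) • φ ξ) := by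
  obtain ⟨n, hn⟩ := exists_nat_ge α
  have h0 : Integrable (fun ξ => ‖φ ξ‖) := φ.integrable.norm
  have hn' := φ.integrable_pow_mul volume n
  refine (h0.add hn').mono' ?_ ?_
  · apply Measurable.aestronglyMeasurable
    have := φ.continuous.measurable
    fun_prop
  · filter_upwards with ξ
    rw [norm_smul, Real.norm_of_nonneg (by positivity)]
    have : ‖ξ‖ ^ α ≤ 1 + ‖ξ‖ ^ n := by
      rcases le_total ‖ξ‖ 1 with h | h
      · have := Real.rpow_le_one (norm_nonneg ξ) h hα
        have := pow_nonneg (norm_nonneg ξ) n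
        linarith
      · have := Real.rpow_le_rpow_of_exponent_le h hn
        rw [Real.rpow_natCast] at this
        linarith
    calc _ ≤ (1 + ‖ξ‖ ^ n) * ‖φ ξ‖ := by gcongr
      _ = _ := by simp [add_mul]

theorem fourierInv_meas {d : ℕ} (w' : EuclideanSpace ℝ (Fin d) → ℂ) (hw' : Integrable w') :
    Measurable fun y => ‖𝓕⁻ w' y‖ₑ := by
  have hcont : Continuous (𝓕⁻ w') := by
    have : 𝓕⁻ w' = fun x => 𝓕 w' (-x) := by
      ext x; exact Real.fourierInv_eq_fourier_neg w' x
    rw [this]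
    have h2 : Continuous (𝓕 w') :=
      VectorFourier.fourierIntegral_continuous Real.continuous_fourierChar
        (by exact continuous_inner) hw'
    fun_prop
  exact hcont.enorm.measurable

theorem gn_abstract (d : ℕ) (hd : 1 ≤ d) (a s p q θ τ σ : ℝ) (ha : 0 < a) (hs : 0 < s)
    (hp : 1 < p) (hq : 1 < q) (hθ0 : 0 < θ) (hθ1 : θ < 1) (hτ0 : 0 ≤ τ) (hτ1 : τ ≤ 1)
    (hσ0 : 0 ≤ σ) (hσ1 : σ ≤ 1)
    (hbal : θ * (s - (1 - σ) * (d / q)) = (1 - θ) * (a + (1 - τ) * (d / 2)))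
    (hexp : p * (τ * (1 - θ)) / 2 + p * (σ * θ) / q = 1) :
    ∃ C : ℝ, ∀ ψ : SchwartzMap (EuclideanSpace ℝ (Fin d)) ℂ,
      eLpNorm (Dop d a (fun x => ψ x)) (ENNReal.ofReal p) volume ≤
        ENNReal.ofReal C * (eLpNorm (fun x => ψ x) 2 volume) ^ (1 - θ) *
          (eLpNorm (Dop d (s + a) (fun x => ψ x))
            (ENNReal.ofReal q) volume) ^ θ := by
  obtain ⟨C1, hC1, H1⟩ := block_bound (d := d) a 2 one_lt_two τ hτ0 hτ1
  obtain ⟨C2, hC2, H2⟩ := block_bound (d := d) (-s) q hq σ hσ0 hσ1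
  obtain ⟨C4, hC4, H4⟩ := MF_strong hd 2 one_lt_two
  obtain ⟨C5, hC5, H5⟩ := MF_strong hd q hq
  set l := a + (1 - τ) * (d / 2) with hl
  set e := s - (1 - σ) * (d / q) with he
  have hθ1' : 0 < 1 - θ := by linarith
  have hτ1' : 0 ≤ 1 - τ := by linarith
  have hσ1' : 0 ≤ 1 - σ := by linarith
  have hp0 : 0 < p := by linarith
  have hq0 : 0 < q := by linarith
  have hlpos : 0 < l := by positivity
  have hepos : 0 < e := by
    have : 0 < θ * e := by rw [hbal]; positivity
    exact pos_of_mul_pos_right this hθ0.le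
  have hθeq : θ = l / (l + e) := by
    rw [_root_.eq_div_iff (by positivity)]; linarith
  set c0 := ENNReal.ofReal (∫ u in Set.Ioi 0, gfun u) with hc0
  have hc0' : c0 ≠ 0 := by simpa [hc0] using gfun_pos
  have hc0t : c0 ≠ ∞ := ENNReal.ofReal_ne_top
  set C3 := c0⁻¹ * (ENNReal.ofReal (1 / e + 1 / l) * (C1 ^ (1 - θ) * C2 ^ θ)) with hC3
  have hC3t : C3 ≠ ∞ := by
    have : c0⁻¹ ≠ ∞ := ENNReal.inv_ne_top.2 hc0'
    have h1 : C1 ^ (1 - θ) ≠ ∞ := ENNReal.rpow_ne_top_of_nonneg hθ1'.le hC1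
    have h2 : C2 ^ θ ≠ ∞ := ENNReal.rpow_ne_top_of_nonneg hθ0.le hC2
    finiteness
  set α := p * (τ * (1 - θ)) / 2 with hα
  set β := p * (σ * θ) / q with hβ
  have hα0 : 0 ≤ α := by positivity
  have hβ0 : 0 ≤ β := by positivity
  set C6 := C3 * ((C4 ^ α * C5 ^ β) ^ (1 / p)) with hC6
  have hC6t : C6 ≠ ∞ := by
    have h1 : C4 ^ α ≠ ∞ := ENNReal.rpow_ne_top_of_nonneg hα0 hC4
    have h2 : C5 ^ β ≠ ∞ := ENNReal.rpow_ne_top_of_nonneg hβ0 hC5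
    exact ENNReal.mul_ne_top hC3t (ENNReal.rpow_ne_top_of_nonneg (by positivity)
      (ENNReal.mul_ne_top h1 h2))
  refine ⟨C6.toReal, ?_⟩
  intro ψ
  rw [ENNReal.ofReal_toReal hC6t]
  -- frequency side functions
  let w0 : EuclideanSpace ℝ (Fin d) → ℂ := 𝓕 (fun x => ψ x)
  let wa : EuclideanSpace ℝ (Fin d) → ℂ := fun ξ => (‖ξ‖ ^ a : ℝ) • w0 ξ
  let wb : EuclideanSpace ℝ (Fin d) → ℂ := fun ξ => (‖ξ‖ ^ (s + a) : ℝ) • w0 ξ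
  have hw0eq : w0 = (𝓕 ψ : SchwartzMap (EuclideanSpace ℝ (Fin d)) ℂ) := by
    rw [SchwartzMap.fourier_coe]
  have hw0 : Integrable w0 := by rw [hw0eq]; exact SchwartzMap.integrable _
  have hwa : Integrable wa := by
    simp only [wa, hw0eq]; exact rpow_integrable a ha.le _
  have hwb : Integrable wb := by
    simp only [wb, hw0eq]; exact rpow_integrable (s + a) (by positivity) _
  have hψ : 𝓕⁻ w0 = fun x => ψ x := by
    rw [hw0eq, ← SchwartzMap.fourierInv_coe]; simp
  have hDa : Dop d a (fun x => ψ x) = 𝓕⁻ wa := rfl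
  have hDb : Dop d (s + a) (fun x => ψ x) = 𝓕⁻ wb := rfl
  rw [hDa, hDb, ← hψ]
  have hA : eLpNorm (𝓕⁻ w0) 2 volume = (∫⁻ y, ‖𝓕⁻ w0 y‖ₑ ^ (2 : ℝ)) ^ (1 / (2 : ℝ)) := by
    rw [eLpNorm_eq_lintegral_rpow_enorm_toReal (by simp) (by simp)]; simp
  have hB : eLpNorm (𝓕⁻ wb) (ENNReal.ofReal q) volume = (∫⁻ y, ‖𝓕⁻ wb y‖ₑ ^ q) ^ (1 / q) := by
    rw [eLpNorm_eq_lintegral_rpow_enorm_toReal (by simpa using hq0) (by simp),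
      ENNReal.toReal_ofReal hq0.le]
  rw [eLpNorm_eq_lintegral_rpow_enorm_toReal (p := ENNReal.ofReal p) (by simpa using hp0) (by simp),
      ENNReal.toReal_ofReal hp0.le]
  rw [hA, hB]
  specialize H1 wa w0 hw0 (fun ξ _ => by simp [wa])
  specialize H2 wa wb hwb (fun ξ hξ => by
    have : ‖ξ‖ ^ a = ‖ξ‖ ^ (-s) * ‖ξ‖ ^ (s + a) := by
      rw [← Real.rpow_add (norm_pos_iff.2 hξ)]; congr 1; ring
    simp only [wa, wb, this, Complex.real_smul]
    push_cast; ring)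
  have m0 := fourierInv_meas w0 hw0
  have mb := fourierInv_meas wb hwb
  specialize H4 _ m0
  specialize H5 _ mb
  have mM := measurable_MF (fun y => ‖𝓕⁻ w0 y‖ₑ)
  have mF := measurable_MF (fun y => ‖𝓕⁻ wb y‖ₑ)
  set M := MF (fun y => ‖𝓕⁻ w0 y‖ₑ) with hM
  set F := MF (fun y => ‖𝓕⁻ wb y‖ₑ) with hF
  set A := (∫⁻ y, ‖𝓕⁻ w0 y‖ₑ ^ (2 : ℝ)) ^ (1 / (2 : ℝ)) with hAdef
  set B := (∫⁻ y, ‖𝓕⁻ wb y‖ₑ ^ q) ^ (1 / q) with hBdef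
  have hSA : ∫⁻ y, ‖𝓕⁻ w0 y‖ₑ ^ (2 : ℝ) = A ^ (2 : ℝ) := by
    rw [hAdef, ← ENNReal.rpow_mul]; simp
  have hSB : ∫⁻ y, ‖𝓕⁻ wb y‖ₑ ^ q = B ^ q := by
    rw [hBdef, ← ENNReal.rpow_mul, one_div_mul_cancel hq0.ne', ENNReal.rpow_one]
  rw [hSA] at H4
  rw [hSB] at H5
  have hpt : ∀ x, ‖𝓕⁻ wa x‖ₑ ≤ C3 * (A ^ ((1 - τ) * (1 - θ)) * B ^ ((1 - σ) * θ)) *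
      (M x ^ (τ * (1 - θ)) * F x ^ (σ * θ)) := by
    intro x
    have h := (rep_bound hd wa hwa x).trans (min_int l e hlpos hepos θ hθeq
      (C1 * (M x ^ τ * A ^ (1 - τ))) (C2 * (F x ^ σ * B ^ (1 - σ))) _
      (fun t ht => (H1 x t ht).trans (le_of_eq (by congr 3; rw [hl]; ring)))
      (fun t ht => (H2 x t ht).trans (le_of_eq (by congr 3; rw [he]; ring))))
    calc ‖𝓕⁻ wa x‖ₑ = c0⁻¹ * (c0 * ‖𝓕⁻ wa x‖ₑ) := by
          rw [← mul_assoc, ENNReal.inv_mul_cancel hc0' hc0t, one_mul]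
      _ ≤ c0⁻¹ * (ENNReal.ofReal (1 / e + 1 / l) * ((C1 * (M x ^ τ * A ^ (1 - τ))) ^ (1 - θ) *
            (C2 * (F x ^ σ * B ^ (1 - σ))) ^ θ)) := mul_le_mul_right h _
      _ = _ := by
          rw [hC3]
          simp only [ENNReal.mul_rpow_of_nonneg _ _ hθ1'.le, ENNReal.mul_rpow_of_nonneg _ _ hθ0.le,
            ENNReal.rpow_mul]
          ring
  set Z := C3 * (A ^ ((1 - τ) * (1 - θ)) * B ^ ((1 - σ) * θ)) with hZ
  have e1 : ∀ x, (M x ^ (τ * (1 - θ)) * F x ^ (σ * θ)) ^ p = (M x ^ (2 : ℝ)) ^ α * (F x ^ q) ^ β := by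
    intro x
    rw [ENNReal.mul_rpow_of_nonneg _ _ hp0.le, ← ENNReal.rpow_mul, ← ENNReal.rpow_mul,
      ← ENNReal.rpow_mul, ← ENNReal.rpow_mul]
    congr 2
    · rw [hα]; ring
    · rw [hβ]; field_simp
  calc (∫⁻ x, ‖𝓕⁻ wa x‖ₑ ^ p) ^ (1 / p)
      ≤ (∫⁻ x, Z ^ p * ((M x ^ (2 : ℝ)) ^ α * (F x ^ q) ^ β)) ^ (1 / p) := by
        gcongr with x
        rw [← e1, ← ENNReal.mul_rpow_of_nonneg _ _ hp0.le]
        gcongr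
        exact hpt x
    _ = (Z ^ p * ∫⁻ x, ((M x ^ (2 : ℝ)) ^ α * (F x ^ q) ^ β)) ^ (1 / p) := by
        rw [lintegral_const_mul _ (by fun_prop)]
    _ ≤ (Z ^ p * ((∫⁻ x, M x ^ (2 : ℝ)) ^ α * (∫⁻ x, F x ^ q) ^ β)) ^ (1 / p) := by
        gcongr
        exact ENNReal.lintegral_mul_norm_pow_le (by fun_prop) (by fun_prop) hα0 hβ0 hexp
    _ ≤ (Z ^ p * ((C4 * A ^ (2 : ℝ)) ^ α * (C5 * B ^ q) ^ β)) ^ (1 / p) := by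
        gcongr
    _ = Z * ((C4 ^ α * C5 ^ β) ^ (1 / p) * (A ^ (τ * (1 - θ)) * B ^ (σ * θ))) := by
        have hp1 : 0 ≤ 1 / p := by positivity
        rw [ENNReal.mul_rpow_of_nonneg _ _ hp1, ← ENNReal.rpow_mul, mul_one_div_cancel hp0.ne',
          ENNReal.rpow_one]
        congr 1
        simp only [ENNReal.mul_rpow_of_nonneg _ _ hp1, ENNReal.mul_rpow_of_nonneg _ _ hα0,
          ENNReal.mul_rpow_of_nonneg _ _ hβ0]
        have eA : ((A ^ (2 : ℝ)) ^ α) ^ (1 / p) = A ^ (τ * (1 - θ)) := by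
          rw [← ENNReal.rpow_mul, ← ENNReal.rpow_mul]
          congr 1; rw [hα]; field_simp
        have eB : ((B ^ q) ^ β) ^ (1 / p) = B ^ (σ * θ) := by
          rw [← ENNReal.rpow_mul, ← ENNReal.rpow_mul]
          congr 1; rw [hβ]; field_simp
        rw [eA, eB]; ring
    _ = C6 * A ^ (1 - θ) * B ^ θ := by
        have eA : A ^ (1 - θ) = A ^ ((1 - τ) * (1 - θ)) * A ^ (τ * (1 - θ)) := by
          rw [← ENNReal.rpow_add_of_nonneg _ _ (by positivity) (by positivity)]
          congr 1; ring
        have eB : B ^ θ = B ^ ((1 - σ) * θ) * B ^ (σ * θ) := by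
          rw [← ENNReal.rpow_add_of_nonneg _ _ (by positivity) (by positivity)]
          congr 1; ring
        rw [eA, eB, hC6, hZ]; ring

/-- Fractional Gagliardo–Nirenberg inequality: for `p ∈ (1,∞)` and
`θ = (2d-2pd+pλ)/(d-2ps-pd+pλ)` with `(d-λ)/(d+2s-λ) ≤ θ < 1`, one has
`‖D^{(d-λ)/2} ψ‖_{L^p} ≤ C ‖ψ‖_{L²}^{1-θ} ‖D^{s+(d-λ)/2} ψ‖_{L^{2p/(p+1)}}^θ`
for every Schwartz function `ψ`. -/
theorem fractional_gagliardo_nirenberg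
    (d : ℕ) (hd : 1 ≤ d) (s lam p θ : ℝ)
    (hs : 0 < s) (hlam₀ : 0 < lam) (hlam₁ : lam < d) (hp : 1 < p)
    (hθ : θ = (2 * d - 2 * p * d + p * lam) / (d - 2 * p * s - p * d + p * lam))
    (hθ₁ : (d - lam) / (d + 2 * s - lam) ≤ θ) (hθ₂ : θ < 1) :
    ∃ C : ℝ, ∀ ψ : SchwartzMap (EuclideanSpace ℝ (Fin d)) ℂ,
      eLpNorm (Dop d ((d - lam) / 2) (fun x => ψ x)) (ENNReal.ofReal p) volume ≤
        ENNReal.ofReal C * (eLpNorm (fun x => ψ x) 2 volume) ^ (1 - θ) *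
          (eLpNorm (Dop d (s + (d - lam) / 2) (fun x => ψ x))
            (ENNReal.ofReal (2 * p / (p + 1))) volume) ^ θ := by
  set a := ((d : ℝ) - lam) / 2 with ha
  have ha0 : 0 < a := by rw [ha]; linarith
  have hlam : lam = d - 2 * a := by rw [ha]; ring
  have hdpos : (0 : ℝ) < d := by exact_mod_cast hd
  have hp0 : 0 < p := by linarith
  have hb : (d - lam) / (d + 2 * s - lam) = a / (s + a) := by
    rw [hlam]
    rw [div_eq_div_iff] <;> [ring; linarith; linarith]
  rw [hb] at hθ₁
  have hθ0 : 0 < θ := lt_of_lt_of_le (by positivity) hθ₁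
  have hden : (d - 2 * p * s - p * d + p * lam) ≠ 0 := by
    intro h
    rw [h, _root_.div_zero] at hθ
    linarith
  rw [_root_.eq_div_iff hden, hlam] at hθ
  rw [div_le_iff₀ (by positivity)] at hθ₁
  -- scaling relation
  have hsc : θ * (2 * p * (s + a) - d) = 2 * p * a + p * d - 2 * d := by linarith
  have hθ1' : 0 < 1 - θ := by linarith
  have hp2 : 2 - θ ≤ p := by
    have h1 : 0 ≤ (p - 2 + θ) * d := by nlinarith
    have := nonneg_of_mul_nonneg_left h1 hdpos
    linarith
  have hq : 1 < 2 * p / (p + 1) := by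
    rw [lt_div_iff₀ (by positivity)]; linarith
  by_cases hc : θ * (p + 1) ≤ 2
  · refine gn_abstract d hd a s p (2 * p / (p + 1)) θ ((2 - θ * (p + 1)) / (p * (1 - θ))) 1 ha0 hs hp
      hq hθ0 hθ₂ (div_nonneg (by linarith) (by positivity)) ?_ zero_le_one le_rfl ?_ ?_
    · rw [div_le_one (by positivity)]; linarith
    · field_simp
      linarith
    · field_simp
      ring
  · push Not at hc
    refine gn_abstract d hd a s p (2 * p / (p + 1)) θ 0 (2 / (θ * (p + 1))) ha0 hs hp
      hq hθ0 hθ₂ le_rfl zero_le_one (by positivity) ?_ ?_ ?_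
    · rw [div_le_one (by positivity)]; linarith
    · field_simp
      linarith
    · field_simp
      ring
end
end

section
/- (Fractional Gagliardo–Nirenberg inequality, endpoint p = ∞.) Let d ≥ 1, s > 0, 0 < λ < d, and assume d < 2s. Set θ = (2d−λ)/(d+2s−λ). Then there is a constant C such that for every Schwartz function ψ on ℝ^d: ‖D^{(d−λ)/2} ψ‖_{L^∞} ≤ C · ‖ψ‖_{L^2}^{1−θ} · ‖D^{s+(d−λ)/2} ψ‖_{L^2}^{θ}. -/
open MeasureTheory SchwartzMap FourierTransform ENNReal

noncomputable section

lemma aux_fourierInv_swap {d : ℕ} (g φ : EuclideanSpace ℝ (Fin d) → ℂ) (hg : Integrable g)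
    (hφ : Integrable φ) : ∫ x, φ x • 𝓕⁻ g x = ∫ x, 𝓕⁻ φ x • g x := by
  have hL : Continuous fun p : EuclideanSpace ℝ (Fin d) × EuclideanSpace ℝ (Fin d) ↦
      (-innerₗ (EuclideanSpace ℝ (Fin d))) p.1 p.2 := by
    simp only [LinearMap.neg_apply, innerₗ_apply_apply]
    fun_prop
  have := VectorFourier.integral_fourierIntegral_smul_eq_flip (μ := volume) (ν := volume)
    (L := -innerₗ (EuclideanSpace ℝ (Fin d))) Real.continuous_fourierChar hL hφ hg
  have e : (-innerₗ (EuclideanSpace ℝ (Fin d))).flip = -innerₗ (EuclideanSpace ℝ (Fin d)) := by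
    ext x y; simp [real_inner_comm]
  rw [e] at this
  exact this.symm

lemma aux_continuous_fourierInv {d : ℕ} (g : EuclideanSpace ℝ (Fin d) → ℂ) (hg : Integrable g) :
    Continuous (𝓕⁻ g) := by
  have hL : Continuous fun p : EuclideanSpace ℝ (Fin d) × EuclideanSpace ℝ (Fin d) ↦
      (-innerₗ (EuclideanSpace ℝ (Fin d))) p.1 p.2 := by
    simp only [LinearMap.neg_apply, innerₗ_apply_apply]
    fun_prop
  exact VectorFourier.fourierIntegral_continuous Real.continuous_fourierChar hL hg

lemma aux_planch {d : ℕ} (g : EuclideanSpace ℝ (Fin d) → ℂ) (hg : Integrable g)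
    (hg2 : MemLp g 2 volume) : eLpNorm (𝓕⁻ g) 2 volume = eLpNorm g 2 volume := by
  set G : Lp (α := EuclideanSpace ℝ (Fin d)) ℂ 2 volume := hg2.toLp g with hG
  have hn : ‖𝓕⁻ G‖ = ‖G‖ := (Lp.fourierTransformₗᵢ (EuclideanSpace ℝ (Fin d)) ℂ).symm.norm_map G
  have hae : ∀ᵐ x, (𝓕⁻ G : Lp (α := EuclideanSpace ℝ (Fin d)) ℂ 2 volume) x = 𝓕⁻ g x := by
    apply ae_eq_of_integral_contDiff_smul_eq
    · exact (Lp.memLp _).locallyIntegrable (by norm_num)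
    · exact (aux_continuous_fourierInv g hg).locallyIntegrable
    intro φ hφ hφc
    have hg₁ : HasCompactSupport (Complex.ofRealCLM ∘ φ) := hφc.comp_left rfl
    have hg₂ : ContDiff ℝ (⊤ : ℕ∞) (Complex.ofRealCLM ∘ φ) := by fun_prop
    set Φ := hg₁.toSchwartzMap hg₂
    have h1 := congrArg (fun T => T Φ) (Lp.fourierInv_toTemperedDistribution_eq G)
    simp only [TemperedDistribution.fourierInv_apply, Lp.toTemperedDistribution_apply] at h1
    have h2 := aux_fourierInv_swap g Φ hg Φ.integrable
    have h3 : ∫ x, (𝓕⁻ Φ) x • G x = ∫ x, 𝓕⁻ (Φ : EuclideanSpace ℝ (Fin d) → ℂ) x • g x := by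
      apply integral_congr_ae
      filter_upwards [hg2.coeFn_toLp] with x hx
      rw [hG, hx, SchwartzMap.fourierInv_coe]
    have h4 := h1.symm.trans (h3.trans h2.symm)
    simpa [Φ] using h4
  rw [← eLpNorm_congr_ae hae, ← eLpNorm_congr_ae hg2.coeFn_toLp, ← Lp.enorm_def, ← Lp.enorm_def,
    ← hG, ← ofReal_norm, ← ofReal_norm, hn]

lemma aux_planch_schwartz {d : ℕ} (ψ : 𝓢(EuclideanSpace ℝ (Fin d), ℂ)) :
    eLpNorm (fun x => 𝓕 ψ x) 2 volume = eLpNorm (fun x => ψ x) 2 volume := by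
  have := aux_planch (⇑(𝓕 ψ : 𝓢(EuclideanSpace ℝ (Fin d), ℂ))) (𝓕 ψ).integrable ((𝓕 ψ).memLp 2)
  rw [← SchwartzMap.fourierInv_coe, fourierInv_fourier_eq] at this
  exact this.symm

lemma aux_decay {d : ℕ} (f : 𝓢(EuclideanSpace ℝ (Fin d), ℂ)) {α : ℝ} (hα : 0 < α) :
    ∃ C : ℝ, ∀ x, ‖(‖x‖ ^ α : ℝ) • f x‖ ≤ C * (1 + ‖x‖) ^ (-((d : ℝ) + 1)) := by
  obtain ⟨n, hn⟩ := exists_nat_ge α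
  refine ⟨2 ^ (n + d + 1) * ((Finset.Iic (n + d + 1, 0)).sup
    fun m => SchwartzMap.seminorm ℝ m.1 m.2) f, fun x => ?_⟩
  have h := SchwartzMap.one_add_le_sup_seminorm_apply (𝕜 := ℝ) (m := (n + d + 1, 0))
    (k := n + d + 1) (n := 0) le_rfl le_rfl f x
  simp only [norm_iteratedFDeriv_zero] at h
  have h1 : (0 : ℝ) < 1 + ‖x‖ := by positivity
  rw [Real.rpow_neg h1.le, ← div_eq_mul_inv, le_div_iff₀ (by positivity)]
  refine le_trans ?_ h
  rw [norm_smul, Real.norm_of_nonneg (by positivity)]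
  have h2 : ‖x‖ ^ α ≤ (1 + ‖x‖) ^ n := by
    calc ‖x‖ ^ α ≤ (1 + ‖x‖) ^ α := by gcongr; linarith
      _ ≤ (1 + ‖x‖) ^ (n : ℝ) := by
        apply Real.rpow_le_rpow_of_exponent_le _ hn
        linarith [norm_nonneg x]
      _ = _ := Real.rpow_natCast _ _
  have h3 : (1 + ‖x‖) ^ ((d : ℝ) + 1) = (1 + ‖x‖) ^ (d + 1) := by
    exact_mod_cast Real.rpow_natCast (1 + ‖x‖) (d + 1)
  rw [h3, add_assoc n, pow_add _ n (d + 1)]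
  calc _ ≤ (1 + ‖x‖) ^ n * ‖f x‖ * (1 + ‖x‖) ^ (d + 1) := by gcongr
    _ = _ := by ring

lemma aux_memLp_bracket (d : ℕ) {r : ℝ} (hr : (d : ℝ) < 2 * r) :
    MemLp (fun x : EuclideanSpace ℝ (Fin d) => (1 + ‖x‖) ^ (-r)) 2 volume := by
  rw [memLp_two_iff_integrable_sq (by apply Measurable.aestronglyMeasurable; fun_prop)]
  have := integrable_one_add_norm (E := EuclideanSpace ℝ (Fin d)) (μ := volume) (r := 2 * r)
    (by simpa using hr)
  refine this.congr (.of_forall fun x => ?_)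
  have h1 : (0 : ℝ) < 1 + ‖x‖ := by positivity
  simp only
  rw [← Real.rpow_natCast, ← Real.rpow_mul h1.le]
  congr 1; push_cast; ring

lemma aux_mul {d : ℕ} (f : 𝓢(EuclideanSpace ℝ (Fin d), ℂ)) {α : ℝ} (hα : 0 < α) :
    Integrable (fun x => (‖x‖ ^ α : ℝ) • f x) ∧ MemLp (fun x => (‖x‖ ^ α : ℝ) • f x) 2 := by
  obtain ⟨C, hC⟩ := aux_decay f hα
  have hm : AEStronglyMeasurable (fun x => (‖x‖ ^ α : ℝ) • f x) :=
    (Continuous.smul (continuous_norm.rpow_const fun _ => .inr hα.le) f.continuous).aestronglyMeasurable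
  constructor
  · refine Integrable.mono' (g := fun x => C * (1 + ‖x‖) ^ (-((d : ℝ) + 1))) ?_ hm (.of_forall hC)
    exact (integrable_one_add_norm (by simp)).const_mul C
  · refine MemLp.of_le ((aux_memLp_bracket d (r := d + 1) ?_).const_mul C) hm
      (.of_forall fun x => (hC x).trans (le_abs_self _))
    linarith [(Nat.cast_nonneg d : (0:ℝ) ≤ d)]

/-- The weight `t^a / (1 + t^b)` -/
def wt (d : ℕ) (a b : ℝ) (x : EuclideanSpace ℝ (Fin d)) : ℝ := ‖x‖ ^ a * (1 + ‖x‖ ^ b)⁻¹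

lemma aux_wt {d : ℕ} {a s : ℝ} (ha : 0 < a) (hs : 0 < s) (h : (d : ℝ) < 2 * s) :
    MemLp (wt d a (s + a)) 2 volume := by
  refine MemLp.of_le ((aux_memLp_bracket d h).const_mul (2 ^ (s + a))) ?_ (.of_forall fun x => ?_)
  · apply Measurable.aestronglyMeasurable; unfold wt; fun_prop
  have h1 : (0 : ℝ) < 1 + ‖x‖ := by positivity
  have h0 := norm_nonneg x
  refine le_trans ?_ (le_abs_self _)
  unfold wt
  rw [Real.norm_of_nonneg (by positivity), Real.rpow_neg h1.le, ← div_eq_mul_inv, ← div_eq_mul_inv,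
    div_le_div_iff₀ (by positivity) (by positivity)]
  calc ‖x‖ ^ a * (1 + ‖x‖) ^ s ≤ (1 + ‖x‖) ^ a * (1 + ‖x‖) ^ s := by gcongr; linarith
    _ = (1 + ‖x‖) ^ (s + a) := by rw [← Real.rpow_add h1, add_comm a s]
    _ ≤ _ := ?_
  rcases le_total ‖x‖ 1 with hx | hx
  · calc (1 + ‖x‖) ^ (s + a) ≤ 2 ^ (s + a) := by gcongr; linarith
      _ = 2 ^ (s + a) * 1 := by ring
      _ ≤ _ := by gcongr; linarith [Real.rpow_nonneg h0 (s + a)]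
  · calc (1 + ‖x‖) ^ (s + a) ≤ (2 * ‖x‖) ^ (s + a) := by gcongr; linarith
      _ = 2 ^ (s + a) * ‖x‖ ^ (s + a) := Real.mul_rpow (by norm_num) h0
      _ ≤ _ := by gcongr; linarith

lemma aux_scale {d : ℕ} (w : EuclideanSpace ℝ (Fin d) → ℝ) (hw : Measurable w) {R : ℝ}
    (hR : 0 < R) : eLpNorm (fun x => w (R⁻¹ • x)) 2 volume
      = ENNReal.ofReal (R ^ ((d : ℝ) / 2)) * eLpNorm w 2 volume := by
  have h1 := eLpNorm_map_measure (p := 2) (μ := volume) (f := fun x : EuclideanSpace ℝ (Fin d) => R⁻¹ • x) (g := w)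
    hw.aestronglyMeasurable (by fun_prop)
  change eLpNorm (w ∘ fun x => R⁻¹ • x) 2 volume = _
  rw [← h1, Measure.map_addHaar_smul _ (by positivity), eLpNorm_smul_measure_of_ne_top (by simp)]
  rw [smul_eq_mul]
  congr 1
  rw [ENNReal.ofReal_rpow_of_nonneg (by positivity) (by positivity)]
  congr 1
  rw [finrank_euclideanSpace_fin, inv_pow, inv_inv, abs_of_pos (by positivity), ← Real.rpow_natCast,
    ← Real.rpow_mul hR.le]
  congr 1
  simp; ring

lemma aux_key {d : ℕ} (f : 𝓢(EuclideanSpace ℝ (Fin d), ℂ)) {a s : ℝ} (ha : 0 < a) (hs : 0 < s)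
    {R : ℝ} (hR : 0 < R) :
    eLpNorm (fun x => (‖x‖ ^ a : ℝ) • f x) 1 volume ≤
      ENNReal.ofReal (R ^ (a + (d : ℝ) / 2)) * eLpNorm (wt d a (s + a)) 2 volume *
       (eLpNorm (fun x => f x) 2 volume + ENNReal.ofReal (R ^ (-(s + a))) *
         eLpNorm (fun x => (‖x‖ ^ (s + a) : ℝ) • f x) 2 volume) := by
  have hwm : Measurable (wt d a (s + a)) := by unfold wt; fun_prop
  set F := (fun x => f x) + (R ^ (-(s + a))) • (fun x => (‖x‖ ^ (s + a) : ℝ) • f x) with hF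
  set W := (R ^ a) • (fun x => wt d a (s + a) (R⁻¹ • x)) with hW
  have hprod : (fun x => (‖x‖ ^ a : ℝ) • f x) = W • F := by
    ext x
    simp only [hW, hF, Pi.smul_apply', Pi.smul_apply, Pi.add_apply, wt]
    rw [norm_smul, norm_inv, Real.norm_of_nonneg hR.le, Real.mul_rpow (by positivity) (norm_nonneg x),
      Real.mul_rpow (by positivity) (norm_nonneg x), Real.inv_rpow hR.le, Real.inv_rpow hR.le,
      Real.rpow_neg hR.le, smul_smul]
    have e : f x + ((R ^ (s + a))⁻¹ * ‖x‖ ^ (s + a)) • f x =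
      (1 + ((R ^ (s + a))⁻¹ * ‖x‖ ^ (s + a))) • f x := by rw [add_smul, one_smul]
    rw [e, smul_smul]
    congr 1
    have h1 : R ^ a ≠ 0 := by positivity
    have h2 : 1 + (R ^ (s + a))⁻¹ * ‖x‖ ^ (s + a) ≠ 0 := by positivity
    rw [smul_eq_mul]
    field_simp
  have hFm2 : AEStronglyMeasurable (fun x => (‖x‖ ^ (s + a) : ℝ) • f x) := 
    (aux_mul f (by positivity : 0 < s + a)).1.1
  have hFm1 : AEStronglyMeasurable (fun x => f x) := f.continuous.aestronglyMeasurable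
  have hWm : AEStronglyMeasurable W := by
    apply AEStronglyMeasurable.const_smul
    exact (hwm.comp (by fun_prop)).aestronglyMeasurable
  rw [hprod]
  refine (eLpNorm_smul_le_mul_eLpNorm (p := 2) (q := 2) (r := 1)
    (hFm1.add (hFm2.const_smul _)) hWm).trans ?_
  gcongr
  · rw [hW, eLpNorm_const_smul, aux_scale _ hwm hR, Real.enorm_of_nonneg (by positivity), ← mul_assoc,
      ← ENNReal.ofReal_mul (by positivity), ← Real.rpow_add hR]
  · refine (eLpNorm_add_le hFm1 (hFm2.const_smul _) (by norm_num)).trans ?_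
    rw [eLpNorm_const_smul,  Real.enorm_of_nonneg (by positivity)]

lemma aux_num {N A B K : ℝ≥0∞} {a s θ δ : ℝ} (hb : 0 < s + a)
    (hθ : θ = (a + δ / 2) / (s + a)) (hK : K ≠ ⊤) (hA : A ≠ ⊤) (hB : B ≠ ⊤) (hA0 : A ≠ 0) (hB0 : B ≠ 0)
    (hKey : ∀ R : ℝ, 0 < R → N ≤ ENNReal.ofReal (R ^ (a + δ / 2)) * K *
      (A + ENNReal.ofReal (R ^ (-(s + a))) * B)) :
    N ≤ ENNReal.ofReal (2 * K.toReal) * A ^ (1 - θ) * B ^ θ := by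
  lift A to NNReal using hA
  lift B to NNReal using hB
  lift K to NNReal using hK
  have hA1 : (0 : ℝ) < A := by
    have : A ≠ 0 := by simpa using hA0
    positivity
  have hB1 : (0 : ℝ) < B := by
    have : B ≠ 0 := by simpa using hB0
    positivity
  refine (hKey (((B : ℝ) / A) ^ (1 / (s + a))) (by positivity)).trans (le_of_eq ?_)
  rw [← Real.rpow_mul (by positivity), ← Real.rpow_mul (by positivity)]
  have e1 : 1 / (s + a) * (a + δ / 2) = θ := by rw [hθ]; ring
  have e2 : 1 / (s + a) * -(s + a) = -1 := by field_simp
  rw [e1, e2, Real.rpow_neg_one, inv_div]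
  rw [← ENNReal.ofReal_coe_nnreal (p := A), ← ENNReal.ofReal_coe_nnreal (p := B),
    ← ENNReal.ofReal_coe_nnreal (p := K), ENNReal.ofReal_rpow_of_pos hA1,
    ENNReal.ofReal_rpow_of_pos hB1, ENNReal.toReal_ofReal (by positivity),
    ← ENNReal.ofReal_mul (by positivity), ← ENNReal.ofReal_mul (by positivity),
    ← ENNReal.ofReal_add (by positivity) (by positivity), ← ENNReal.ofReal_mul (by positivity),
    ← ENNReal.ofReal_mul (by positivity), ← ENNReal.ofReal_mul (by positivity)]
  congr 1
  rw [Real.div_rpow hB1.le hA1.le, Real.rpow_sub hA1, Real.rpow_one]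
  field_simp
  ring

lemma aux_opt {d : ℕ} (f : 𝓢(EuclideanSpace ℝ (Fin d), ℂ)) {a s θ : ℝ} (ha : 0 < a) (hs : 0 < s)
    (hd : (d : ℝ) < 2 * s) (hθ : θ = (a + d / 2) / (s + a)) :
    eLpNorm (fun x => (‖x‖ ^ a : ℝ) • f x) 1 volume ≤
      ENNReal.ofReal (2 * (eLpNorm (wt d a (s + a)) 2 volume).toReal) *
       (eLpNorm (fun x => f x) 2 volume) ^ (1 - θ) *
         (eLpNorm (fun x => (‖x‖ ^ (s + a) : ℝ) • f x) 2 volume) ^ θ := by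
  have hb : 0 < s + a := by positivity
  have hFm2 : AEStronglyMeasurable (fun x => (‖x‖ ^ (s + a) : ℝ) • f x) := (aux_mul f hb).1.aestronglyMeasurable
  have hFm1 : AEStronglyMeasurable (fun x => f x) := f.continuous.aestronglyMeasurable
  have hK : eLpNorm (wt d a (s + a)) 2 volume ≠ ⊤ := by
    have h := aux_wt (d := d) (a := a) (s := s) ha hs hd
    exact h.eLpNorm_ne_top
  have hA : eLpNorm (fun x => f x) 2 volume ≠ ⊤ := by
    have h : MemLp (⇑f) 2 volume := f.memLp 2 volume
    exact h.eLpNorm_ne_top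
  have hB : eLpNorm (fun x => (‖x‖ ^ (s + a) : ℝ) • f x) 2 volume ≠ ⊤ := by
    have h := (aux_mul f hb).2
    exact h.eLpNorm_ne_top
  by_cases hA0 : eLpNorm (fun x => f x) 2 volume = 0
  · rw [eLpNorm_eq_zero_iff hFm1 (by norm_num)] at hA0
    have : (fun x => (‖x‖ ^ a : ℝ) • f x) =ᵐ[volume] 0 := by
      filter_upwards [hA0] with x hx
      simp at hx; simp [hx]
    rw [eLpNorm_congr_ae this, eLpNorm_zero]; exact bot_le
  by_cases hB0 : eLpNorm (fun x => (‖x‖ ^ (s + a) : ℝ) • f x) 2 volume = 0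
  · rw [eLpNorm_eq_zero_iff hFm2 (by norm_num)] at hB0
    have : (fun x => (‖x‖ ^ a : ℝ) • f x) =ᵐ[volume] 0 := by
      filter_upwards [hB0] with x hx
      simp only [Pi.zero_apply, smul_eq_zero] at hx ⊢
      refine hx.imp_left fun h => ?_
      rw [Real.rpow_eq_zero (norm_nonneg _) hb.ne'] at h
      rw [h, Real.zero_rpow ha.ne']
    rw [eLpNorm_congr_ae this, eLpNorm_zero]; exact bot_le
  exact aux_num hb hθ hK hA hB hA0 hB0 fun R hR => aux_key f ha hs hR

/-- Fractional Gagliardo–Nirenberg inequality, endpoint case `p = ∞`: if `d < 2s` and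
`θ = (2d-λ)/(d+2s-λ)`, then
`‖D^{(d-λ)/2} ψ‖_{L^∞} ≤ C ‖ψ‖_{L²}^{1-θ} ‖D^{s+(d-λ)/2} ψ‖_{L²}^θ`
for every Schwartz function `ψ`. -/
theorem fractional_gagliardo_nirenberg_endpoint
    (d : ℕ) (hd : 1 ≤ d) (s lam θ : ℝ)
    (hs : 0 < s) (hlam₀ : 0 < lam) (hlam₁ : lam < d) (hds : (d : ℝ) < 2 * s)
    (hθ : θ = (2 * d - lam) / (d + 2 * s - lam)) :
    ∃ C : ℝ, ∀ ψ : SchwartzMap (EuclideanSpace ℝ (Fin d)) ℂ,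
      eLpNorm (Dop d ((d - lam) / 2) (fun x => ψ x)) ⊤ volume ≤
        ENNReal.ofReal C * (eLpNorm (fun x => ψ x) 2 volume) ^ (1 - θ) *
          (eLpNorm (Dop d (s + (d - lam) / 2) (fun x => ψ x)) 2 volume) ^ θ := by
  have ha : 0 < (d - lam) / 2 := by linarith
  have hθ' : θ = ((d - lam) / 2 + d / 2) / (s + (d - lam) / 2) := by
    rw [hθ, div_eq_div_iff (by linarith) (by linarith)]; ring
  refine ⟨2 * (eLpNorm (wt d ((d - lam) / 2) (s + (d - lam) / 2)) 2 volume).toReal, fun ψ => ?_⟩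
  have hb : 0 < s + (d - lam) / 2 := by linarith
  have h := aux_opt (𝓕 ψ) ha hs hds hθ'
  have hm := aux_mul (𝓕 ψ) hb
  rw [aux_planch_schwartz, ← aux_planch _ hm.1 hm.2] at h
  rw [SchwartzMap.fourier_coe] at h
  refine le_trans ?_ h
  rw [eLpNorm_exponent_top]
  refine eLpNormEssSup_le_of_ae_enorm_bound (.of_forall fun x => ?_)
  rw [eLpNorm_one_eq_lintegral_enorm]
  unfold Dop
  rw [Real.fourierInv_eq]
  refine (enorm_integral_le_lintegral_enorm _).trans (le_of_eq ?_)
  congr 1; ext v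
  rw [Circle.smul_def, enorm_smul]
  have : ‖((Real.fourierChar (inner ℝ v x) : Circle) : ℂ)‖ₑ = 1 := by
    rw [← ofReal_norm, Circle.norm_coe, ENNReal.ofReal_one]
  rw [this, one_mul]
end
end

section
/- Let d ≥ 1, 0 < λ < d, and let f_n, f be measurable complex-valued functions on ℝ^d such that f_n(x) → f(x) for a.e. x ∈ ℝ^d and sup_n I_λ(f_n) < ∞. Then ∬_{ℝ^d×ℝ^d} \overline{f_n(x)} f(x) \overline{f(y)} f_n(y) |x−y|^{−λ} dx dy → ∬_{ℝ^d×ℝ^d} |f(x)|² |f(y)|² |x−y|^{−λ} dx dy as n → ∞. -/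
open MeasureTheory Filter ENNReal

noncomputable section

/-- The Riesz energy `I_λ(g) = ∬ |g(x)|² |g(y)|² |x-y|^{-λ} dx dy`. -/
def rieszEnergy (d : ℕ) (lam : ℝ) (g : EuclideanSpace ℝ (Fin d) → ℂ) : ℝ≥0∞ :=
  ∫⁻ x, ∫⁻ y, (‖g x‖₊ : ℝ≥0∞) ^ 2 * (‖g y‖₊ : ℝ≥0∞) ^ 2 *
    ENNReal.ofReal (‖x - y‖ ^ (-lam))

theorem aux_tendsto {X : Type*} [MeasurableSpace X] (μ : Measure X) (h : ℕ → X → ℝ≥0∞)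
    (g : X → ℝ≥0∞) (hh : ∀ n, Measurable (h n)) (hg : Measurable g) (C : ℝ≥0∞) (hC : C ≠ ⊤)
    (hb : ∀ n, ∫⁻ x, h n x ^ 2 ∂μ ≤ C) (hgf : ∫⁻ x, g x ^ 2 ∂μ ≠ ⊤)
    (hlim : ∀ᵐ x ∂μ, Tendsto (fun n => h n x) atTop (nhds 0)) :
    Tendsto (fun n => ∫⁻ x, h n x * g x ∂μ) atTop (nhds 0) := by
  have key : ∀ K : ℕ, Tendsto (fun n => ∫⁻ x, min (h n x) (K * g x) * g x ∂μ) atTop (nhds 0) := by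
    intro K
    have h0 : (0 : ℝ≥0∞) = ∫⁻ x, (0 : ℝ≥0∞) ∂μ := by simp
    rw [h0]
    refine tendsto_lintegral_of_dominated_convergence (fun x => K * g x ^ 2) (fun n => by fun_prop)
      (fun n => Eventually.of_forall fun x => ?_) ?_ ?_
    · calc min (h n x) (K * g x) * g x ≤ (K * g x) * g x := by gcongr; exact min_le_right _ _
        _ = _ := by ring
    · rw [lintegral_const_mul _ (by fun_prop)]
      exact ENNReal.mul_ne_top (by simp) hgf
    · have hfin : ∀ᵐ x ∂μ, g x ^ 2 < ⊤ := ae_lt_top (by fun_prop) hgf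
      filter_upwards [hlim, hfin] with x hx hgx
      have hgx' : g x ≠ ⊤ := by
        intro h; simp [h] at hgx
      have h1 : Tendsto (fun n => h n x * g x) atTop (nhds (0 * g x)) :=
        ENNReal.Tendsto.mul_const hx (Or.inr hgx')
      rw [zero_mul] at h1
      refine tendsto_of_tendsto_of_tendsto_of_le_of_le tendsto_const_nhds h1 (fun _ => zero_le) ?_
      intro n
      simp only
      gcongr
      exact min_le_left _ _
  have bd : ∀ K : ℕ, K ≠ 0 → ∀ n, ∫⁻ x, h n x * g x ∂μ ≤
      ∫⁻ x, min (h n x) (K * g x) * g x ∂μ + C / K := by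
    intro K hK n
    have hK0 : (K : ℝ≥0∞) ≠ 0 := by exact_mod_cast hK
    calc ∫⁻ x, h n x * g x ∂μ
        ≤ ∫⁻ x, (min (h n x) (K * g x) * g x + (K : ℝ≥0∞)⁻¹ * h n x ^ 2) ∂μ := by
          refine lintegral_mono fun x => ?_
          rcases le_total (h n x) (K * g x) with hle | hle
          · simp only [min_eq_left hle]; exact le_self_add
          · refine le_trans ?_ le_add_self
            have : g x ≤ (K : ℝ≥0∞)⁻¹ * h n x := by
              rw [mul_comm, ← div_eq_mul_inv, ENNReal.le_div_iff_mul_le (Or.inl hK0) (Or.inl (by simp)), mul_comm]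
              exact hle
            calc h n x * g x ≤ h n x * ((K : ℝ≥0∞)⁻¹ * h n x) := by gcongr
              _ = _ := by ring
      _ = ∫⁻ x, min (h n x) (K * g x) * g x ∂μ + (K : ℝ≥0∞)⁻¹ * ∫⁻ x, h n x ^ 2 ∂μ := by
          rw [lintegral_add_left (by fun_prop), lintegral_const_mul _ (by fun_prop)]
      _ ≤ _ := by
          rw [div_eq_mul_inv, mul_comm C]
          gcongr
          exact hb n
  have hCK : Tendsto (fun K : ℕ => C / K) atTop (nhds 0) := by
    have := ENNReal.Tendsto.const_mul ENNReal.tendsto_inv_nat_nhds_zero (Or.inr hC : (0:ℝ≥0∞) ≠ 0 ∨ C ≠ ⊤)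
    simpa [div_eq_mul_inv] using this
  rw [ENNReal.tendsto_nhds_zero]
  intro ε hε
  have hε2 : 0 < ε / 2 := ENNReal.half_pos hε.ne'
  obtain ⟨K, hK, hK0⟩ := ((ENNReal.tendsto_nhds_zero.1 hCK (ε / 2) hε2).and
    (eventually_ne_atTop 0)).exists
  filter_upwards [ENNReal.tendsto_nhds_zero.1 (key K) (ε / 2) hε2] with n hn
  calc _ ≤ _ := bd K hK0 n
    _ ≤ ε / 2 + ε / 2 := add_le_add hn hK
    _ = ε := ENNReal.add_halves ε

theorem aux_weak {X : Type*} [MeasurableSpace X] (μ : Measure X) (u : ℕ → X → ℂ)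
    (v g : X → ℂ) (hu : ∀ n, Measurable (u n)) (hv : Measurable v) (hg : Measurable g)
    (M : ℝ≥0∞) (hM : M ≠ ⊤)
    (hb : ∀ n, ∫⁻ x, ‖u n x‖ₑ ^ 2 ∂μ ≤ M) (hgv : ∀ x, ‖g x‖ₑ = ‖v x‖ₑ)
    (hlim : ∀ᵐ x ∂μ, Tendsto (fun n => u n x) atTop (nhds (v x))) :
    (∀ n, Integrable (fun x => u n x * g x) μ) ∧ Integrable (fun x => v x * g x) μ ∧
    Tendsto (fun n => ∫ x, u n x * g x ∂μ) atTop (nhds (∫ x, v x * g x ∂μ)) := by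
  have hvM : ∫⁻ x, ‖v x‖ₑ ^ 2 ∂μ ≤ M := by
    calc ∫⁻ x, ‖v x‖ₑ ^ 2 ∂μ = ∫⁻ x, liminf (fun n => ‖u n x‖ₑ ^ 2) atTop ∂μ := by
          refine lintegral_congr_ae ?_
          filter_upwards [hlim] with x hx
          have : Tendsto (fun n => ‖u n x‖ₑ ^ 2) atTop (nhds (‖v x‖ₑ ^ 2)) :=
            ((ENNReal.continuous_pow 2).tendsto _).comp hx.enorm
          exact this.liminf_eq.symm
      _ ≤ liminf (fun n => ∫⁻ x, ‖u n x‖ₑ ^ 2 ∂μ) atTop :=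
          lintegral_liminf_le (fun n => by fun_prop)
      _ ≤ M := by
          refine (liminf_le_liminf (Eventually.of_forall hb)).trans ?_
          simp
  have hgM : ∫⁻ x, ‖g x‖ₑ ^ 2 ∂μ ≤ M := by simpa only [hgv] using hvM
  have int : ∀ w : X → ℂ, Measurable w → ∫⁻ x, ‖w x‖ₑ ^ 2 ∂μ ≤ M →
      Integrable (fun x => w x * g x) μ := by
    intro w hw hwM
    refine ⟨(hw.mul hg).aestronglyMeasurable, ?_⟩
    rw [HasFiniteIntegral]
    calc ∫⁻ x, ‖w x * g x‖ₑ ∂μ ≤ ∫⁻ x, (‖w x‖ₑ ^ 2 + ‖g x‖ₑ ^ 2) ∂μ := by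
          refine lintegral_mono fun x => ?_
          rw [enorm_mul]
          rcases le_total ‖w x‖ₑ ‖g x‖ₑ with h | h
          · refine le_trans ?_ le_add_self
            rw [sq]; gcongr
          · refine le_trans ?_ le_self_add
            rw [sq]; gcongr
      _ = _ := lintegral_add_left (by fun_prop) _
      _ ≤ M + M := add_le_add hwM hgM
      _ < ⊤ := by simp [lt_top_iff_ne_top, hM]
  refine ⟨fun n => int _ (hu n) (hb n), int _ hv hvM, ?_⟩
  refine tendsto_integral_of_L1 _ (int _ hv hvM).aestronglyMeasurable
    (Eventually.of_forall fun n => int _ (hu n) (hb n)) ?_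
  have := aux_tendsto μ (fun n x => ‖u n x - v x‖ₑ) (fun x => ‖g x‖ₑ) (fun n => by fun_prop)
    (by fun_prop) (4 * (M + M)) (ENNReal.mul_ne_top (by simp) (by simp [hM])) ?_
    (ne_top_of_le_ne_top hM hgM) ?_
  · refine this.congr fun n => lintegral_congr fun x => ?_
    rw [← sub_mul, enorm_mul]
  · intro n
    calc ∫⁻ x, ‖u n x - v x‖ₑ ^ 2 ∂μ ≤ ∫⁻ x, 4 * (‖u n x‖ₑ ^ 2 + ‖v x‖ₑ ^ 2) ∂μ := by
          refine lintegral_mono fun x => ?_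
          have h1 : ‖u n x - v x‖ₑ ≤ ‖u n x‖ₑ + ‖v x‖ₑ := enorm_sub_le
          rcases le_total ‖u n x‖ₑ ‖v x‖ₑ with h | h
          · calc ‖u n x - v x‖ₑ ^ 2 ≤ (‖v x‖ₑ + ‖v x‖ₑ) ^ 2 := by
                  gcongr; exact h1.trans (by gcongr)
              _ = 4 * ‖v x‖ₑ ^ 2 := by ring
              _ ≤ _ := by gcongr; exact le_add_self
          · calc ‖u n x - v x‖ₑ ^ 2 ≤ (‖u n x‖ₑ + ‖u n x‖ₑ) ^ 2 := by
                  gcongr; exact h1.trans (by gcongr)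
              _ = 4 * ‖u n x‖ₑ ^ 2 := by ring
              _ ≤ _ := by gcongr; exact le_self_add
      _ = 4 * (∫⁻ x, ‖u n x‖ₑ ^ 2 ∂μ + ∫⁻ x, ‖v x‖ₑ ^ 2 ∂μ) := by
          rw [lintegral_const_mul _ (by fun_prop), lintegral_add_left (by fun_prop)]
      _ ≤ _ := by gcongr; exact hb n
  · filter_upwards [hlim] with x hx
    have := (hx.sub_const (v x)).enorm
    simpa using this

/-- If `f_n → f` a.e. and the Riesz energies of the `f_n` are uniformly bounded, then
`∬ conj f_n(x) f(x) conj f(y) f_n(y) |x-y|^{-λ} dx dy → ∬ |f(x)|² |f(y)|² |x-y|^{-λ} dx dy`. -/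
theorem riesz_weak_convergence_term
    (d : ℕ) (hd : 1 ≤ d) (lam : ℝ) (hlam₀ : 0 < lam) (hlam₁ : lam < d)
    (f : ℕ → EuclideanSpace ℝ (Fin d) → ℂ) (f₀ : EuclideanSpace ℝ (Fin d) → ℂ)
    (hmeas : ∀ n, Measurable (f n)) (hmeas₀ : Measurable f₀)
    (hae : ∀ᵐ x : EuclideanSpace ℝ (Fin d), Tendsto (fun n => f n x) atTop (nhds (f₀ x)))
    (hriesz : ∃ M : ℝ≥0∞, M < ⊤ ∧ ∀ n, rieszEnergy d lam (f n) ≤ M) :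
    Tendsto (fun n => ∫ x, ∫ y,
        (starRingEnd ℂ) (f n x) * f₀ x * (starRingEnd ℂ) (f₀ y) * f n y *
          ((‖x - y‖ ^ (-lam) : ℝ) : ℂ))
      atTop
      (nhds (∫ x, ∫ y,
        ((‖f₀ x‖ ^ 2 * ‖f₀ y‖ ^ 2 * ‖x - y‖ ^ (-lam) : ℝ) : ℂ))) := by
  obtain ⟨M, hM, hMb⟩ := hriesz
  let E := EuclideanSpace ℝ (Fin d)
  let r : E × E → ℝ := fun p => Real.sqrt (‖p.1 - p.2‖ ^ (-lam))
  have hr : Measurable r := by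
    have : Measurable fun p : E × E => ‖p.1 - p.2‖ := by fun_prop
    exact (this.pow_const _).sqrt
  have hrr : ∀ p : E × E, r p * r p = ‖p.1 - p.2‖ ^ (-lam) := fun p =>
    Real.mul_self_sqrt (by positivity)
  have hrc : ∀ p : E × E, (r p : ℂ) * (r p : ℂ) = ((‖p.1 - p.2‖ ^ (-lam) : ℝ) : ℂ) := by
    intro p; rw [← hrr]; push_cast; rfl
  have hstar : Measurable (fun z : ℂ => (starRingEnd ℂ) z) := Complex.continuous_conj.measurable
  let U : (E → ℂ) → E × E → ℂ := fun w p => (starRingEnd ℂ) (w p.1) * w p.2 * (r p : ℂ)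
  have hU : ∀ w : E → ℂ, Measurable w → Measurable (U w) := fun w hw =>
    ((hstar.comp (hw.comp measurable_fst)).mul (hw.comp measurable_snd)).mul
      (Complex.measurable_ofReal.comp hr)
  let g : E × E → ℂ := fun p => f₀ p.1 * (starRingEnd ℂ) (f₀ p.2) * (r p : ℂ)
  have hg : Measurable g :=
    ((hmeas₀.comp measurable_fst).mul (hstar.comp (hmeas₀.comp measurable_snd))).mul
      (Complex.measurable_ofReal.comp hr)
  have hen : ∀ w : E → ℂ, Measurable w →
      ∫⁻ p, ‖U w p‖ₑ ^ 2 ∂((volume : Measure E).prod volume) = rieszEnergy d lam w := by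
    intro w hw
    have := hU w hw
    rw [lintegral_prod _ (by fun_prop), rieszEnergy]
    refine lintegral_congr fun x => lintegral_congr fun y => ?_
    have h1 : ‖(r (x, y) : ℂ)‖ₑ ^ 2 = ENNReal.ofReal (‖x - y‖ ^ (-lam)) := by
      rw [← hrr (x, y), sq, ENNReal.ofReal_mul (Real.sqrt_nonneg _), ← ofReal_norm_eq_enorm,
        Complex.norm_real, Real.norm_of_nonneg (Real.sqrt_nonneg _)]
    have h2 : ‖(starRingEnd ℂ) (w x)‖ₑ = ‖w x‖ₑ := by
      rw [← ofReal_norm_eq_enorm, ← ofReal_norm_eq_enorm, RCLike.norm_conj]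
    simp only [U, enorm_mul, mul_pow, h1, h2]
    rfl
  have hl : ∀ᵐ p ∂((volume : Measure E).prod volume),
      Tendsto (fun n => U (f n) p) atTop (nhds (U f₀ p)) := by
    filter_upwards [Measure.quasiMeasurePreserving_fst.ae hae,
      Measure.quasiMeasurePreserving_snd.ae hae] with p h1 h2
    exact (((Complex.continuous_conj.tendsto _).comp h1).mul h2).mul_const _
  obtain ⟨hi, hi0, ht⟩ := aux_weak ((volume : Measure E).prod volume) (fun n => U (f n)) (U f₀) g
    (fun n => hU _ (hmeas n)) (hU _ hmeas₀) hg M hM.ne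
    (fun n => (hen _ (hmeas n)).le.trans (hMb n)) (fun p => by
      rw [← ofReal_norm_eq_enorm, ← ofReal_norm_eq_enorm]
      simp [U, g]) hl
  rw [integral_prod _ hi0] at ht
  convert ht using 2
  · rename_i n
    rw [integral_prod _ (hi n)]
    refine integral_congr_ae (Eventually.of_forall fun x => integral_congr_ae
      (Eventually.of_forall fun y => ?_))
    simp only [U, g]
    rw [← hrc (x, y)]
    ring
  · refine integral_congr_ae (Eventually.of_forall fun x => integral_congr_ae
      (Eventually.of_forall fun y => ?_))
    simp only [U, g]
    rw [Complex.ofReal_mul, ← hrc (x, y)]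
    push_cast
    rw [← Complex.conj_mul', ← Complex.conj_mul']
    ring
end
end
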